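/- arXiv:1007.1128 — 2 statements merged into one kernel-verified Lean document; each statement's English description precedes it below -/
import Mathlib

section
/- Let f(e^{iθ}) = e^{V(e^{iθ})} where V(z) = V_1 z + V_{-1} z^{-1} is a Laurent polynomial. Then the strong Szegő asymptotic formula holds exactly in the limit: ln D_n(f) − n V_0 → V_1 V_{-1} as n → ∞, where V_0 = 0 here. Equivalently, D_n(e^{V_1 z + V_{-1}/z}) e^{-V_1 V_{-1}} → 1 as n → ∞. -/
open MeasureTheory Filter

open scoped Real

/-- Fourier coefficient of a symbol `f(e^{iθ})`, given as a function of `θ`. -/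
noncomputable def toeplitzCoeff (f : ℝ → ℂ) (j : ℤ) : ℂ :=
  (1 / (2 * (π : ℂ))) *
    ∫ θ in (0:ℝ)..(2 * π), f θ * Complex.exp (-(j * θ) * Complex.I)

/-- Toeplitz determinant of size `n` with symbol `f`. -/
noncomputable def toeplitzDet (f : ℝ → ℂ) (n : ℕ) : ℂ :=
  Matrix.det (Matrix.of fun j k : Fin n => toeplitzCoeff f ((j : ℤ) - (k : ℤ)))

/-!
Write `D_n` for the Toeplitz determinant of the symbol `e^{az + b/z}`. Differentiating in `a` shifts
every row of the Toeplitz matrix to the preceding one, so that `dD_n/da` is the determinant in which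
only row `0` has been replaced, namely by row `-1` of the infinite Toeplitz matrix. Since
`e^{-b/z} e^{az + b/z} = e^{az}` has no negative Fourier coefficients,
`∑ₘ (-b)^m / m! • row (m - 1) = 0`. Modulo the rows of the matrix itself, row `-1` is therefore `b`
times row `0` plus a remainder starting at `m = n + 1`. The factorial beats the at most geometric
growth of the other rows, so `d(D_n e^{-ab})/da → 0` uniformly on bounded sets, whereas `D_n = 1` at
`a = 0`, where the Toeplitz matrix is unitriangular.
-/

section Determinant

variable {n : Type*} [Fintype n] [DecidableEq n]

theorem enorm_det_le_prod_sum_enorm {𝕜 : Type*} [NormedField 𝕜] (M : Matrix n n 𝕜) :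
    ‖M.det‖ₑ ≤ ∏ i, ∑ j, ‖M i j‖ₑ := by
  have enorm_term (σ : Equiv.Perm n) :
      ‖Equiv.Perm.sign σ • ∏ i, M.transpose (σ i) i‖ₑ = ∏ i, ‖M i (σ i)‖ₑ := by
    rcases Int.units_eq_one_or (Equiv.Perm.sign σ) with h | h <;>
      simp [h, enorm_eq_nnnorm, nnnorm_prod]
  rw [← Matrix.det_transpose, Matrix.det_apply, Finset.prod_univ_sum, Fintype.piFinset_univ]
  calc _ ≤ ∑ σ : Equiv.Perm n, ∏ i, ‖M i (σ i)‖ₑ :=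
        (enorm_sum_le _ _).trans_eq (Finset.sum_congr rfl fun σ _ => enorm_term σ)
    _ = ∑ p ∈ Finset.univ.map ⟨fun σ : Equiv.Perm n => (σ : n → n), DFunLike.coe_injective⟩,
          ∏ i, ‖M i (p i)‖ₑ := by simp
    _ ≤ ∑ p : n → n, ∏ i, ‖M i (p i)‖ₑ := Finset.sum_le_sum_of_subset (Finset.subset_univ _)

theorem hasDerivAt_matrix_det {𝕜 : Type*} [NontriviallyNormedField 𝕜] {M : 𝕜 → Matrix n n 𝕜}
    {M' : Matrix n n 𝕜} {z : 𝕜} (hM : ∀ i j, HasDerivAt (fun w => M w i j) (M' i j) z) :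
    HasDerivAt (fun w => (M w).det) (∑ i, ((M z).updateRow i (M' i)).det) z := by
  let detRow : ContinuousMultilinearMap 𝕜 (fun _ : n => n → 𝕜) 𝕜 :=
    { (Matrix.detRowAlternating (n := n) (R := 𝕜)).toMultilinearMap with
      cont := by exact Continuous.matrix_det (A := fun M : Matrix n n 𝕜 => M) continuous_id }
  have hrow (i : n) : HasDerivAt (fun w => M w i) (M' i) z := hasDerivAt_pi.2 (hM i)
  have hdet := (HasFDerivAt.multilinear_comp (f := detRow)
    fun i => (hrow i).hasFDerivAt).hasDerivAt
  simp only [_root_.sum_apply, ContinuousLinearMap.comp_apply,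
    ContinuousLinearMap.toSpanSingleton_apply, one_smul,
    ContinuousMultilinearMap.toContinuousLinearMap_apply] at hdet
  exact hdet

end Determinant

section FourierCoefficients

variable {g : ℝ → ℂ}

theorem toeplitzCoeff_one (j : ℤ) : toeplitzCoeff 1 j = if j = 0 then 1 else 0 := by
  have hpi : (π : ℂ) ≠ 0 := by exact_mod_cast Real.pi_ne_zero
  split_ifs with hj
  · simp [toeplitzCoeff, hj]
    field_simp
  · have hne : -(j * Complex.I) ≠ 0 := by simp [hj]
    have hperiod : Complex.exp (-(j * Complex.I) * (2 * π : ℝ)) = 1 :=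
      Complex.exp_eq_one_iff.2 ⟨-j, by push_cast; ring⟩
    have hint := integral_exp_mul_complex (a := 0) (b := 2 * π) hne
    have hchar (θ : ℝ) : -(j * θ : ℂ) * Complex.I = -(j * Complex.I) * θ := by ring
    simp only [toeplitzCoeff, Pi.one_apply, one_mul, hchar, hint, hperiod]
    simp

theorem toeplitzCoeff_exp_int_mul (g : ℝ → ℂ) (s j : ℤ) :
    toeplitzCoeff (fun θ => Complex.exp (s * θ * Complex.I) * g θ) j = toeplitzCoeff g (j - s) := by
  simp only [toeplitzCoeff, mul_right_comm _ (g _), ← Complex.exp_add, mul_comm (g _)]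
  congr! 5
  push_cast
  ring

theorem toeplitzCoeff_const_mul (c : ℂ) (g : ℝ → ℂ) (j : ℤ) :
    toeplitzCoeff (fun θ => c * g θ) j = c * toeplitzCoeff g j := by
  simp only [toeplitzCoeff, mul_assoc c, intervalIntegral.integral_const_mul]
  ring

theorem hasSum_toeplitzCoeff_mul {ι : Type*} [Countable ι] {u : ι → ℂ}
    (hu : Summable fun m => ‖u m‖) {s : ι → ℤ} {h : ℝ → ℂ}
    (hh : ∀ θ : ℝ, HasSum (fun m => u m * Complex.exp (s m * θ * Complex.I)) (h θ))
    (hg : IntervalIntegrable g volume 0 (2 * π)) (j : ℤ) :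
    HasSum (fun m => u m * toeplitzCoeff g (j - s m)) (toeplitzCoeff (fun θ => h θ * g θ) j) := by
  have norm_char (k : ℤ) (θ : ℝ) : ‖Complex.exp (k * θ * Complex.I)‖ = 1 := by
    simpa using Complex.norm_exp_ofReal_mul_I (k * θ)
  have norm_char_neg (θ : ℝ) : ‖Complex.exp (-(j * θ) * Complex.I)‖ = 1 := by
    simpa using norm_char (-j) θ
  have hint := intervalIntegral.hasSum_integral_of_dominated_convergence
    (μ := volume) (a := 0) (b := 2 * π)
    (F := fun m θ => u m * (Complex.exp (s m * θ * Complex.I) * g θ) *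
      Complex.exp (-(j * θ) * Complex.I))
    (fun m θ => ‖u m‖ * ‖g θ‖)
    (fun m => by
      have := hg.aestronglyMeasurable_restrict_uIoc
      fun_prop)
    (fun m => ae_of_all _ fun θ _ => by simp only [norm_mul, norm_char, norm_char_neg]; simp)
    (ae_of_all _ fun θ _ => hu.mul_right _)
    (by simpa only [tsum_mul_right] using hg.norm.const_mul _)
    (f := fun θ => h θ * g θ * Complex.exp (-(j * θ) * Complex.I))
    (ae_of_all _ fun θ _ => by
      simpa only [mul_assoc] using
        (hh θ).mul_right (g θ * Complex.exp (-(j * θ) * Complex.I)))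
  refine (hint.mul_left (1 / (2 * (π : ℂ)))).congr_fun fun m => ?_
  rw [← toeplitzCoeff_exp_int_mul, ← toeplitzCoeff_const_mul, toeplitzCoeff]

theorem hasDerivAt_toeplitzCoeff_exp_mul {u : ℝ → ℂ} (hu : Continuous u)
    (hg : IntervalIntegrable g volume 0 (2 * π)) (c : ℂ) (j : ℤ) :
    HasDerivAt (fun z => toeplitzCoeff (fun θ => Complex.exp (z * u θ) * g θ) j)
      (toeplitzCoeff (fun θ => u θ * (Complex.exp (c * u θ) * g θ)) j) c := by
  obtain ⟨B, hB⟩ := isCompact_uIcc.exists_bound_of_continuousOn (f := u) (s := Set.uIcc 0 (2 * π))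
    hu.continuousOn
  have hchar : Continuous fun θ : ℝ => Complex.exp (-(j * θ) * Complex.I) := by fun_prop
  have hintegrand (z : ℂ) : IntervalIntegrable
      (fun θ => Complex.exp (z * u θ) * g θ * Complex.exp (-(j * θ) * Complex.I))
      volume 0 (2 * π) :=
    (hg.continuousOn_mul (by fun_prop)).mul_continuousOn hchar.continuousOn
  have hbound {z : ℂ} (hz : z ∈ Metric.ball c 1) {θ : ℝ} (hθ : θ ∈ Set.uIoc 0 (2 * π)) :
      ‖u θ * (Complex.exp (z * u θ) * g θ) * Complex.exp (-(j * θ) * Complex.I)‖ ≤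
        B * Real.exp ((‖c‖ + 1) * B) * ‖g θ‖ := by
    have huB := hB θ (Set.uIoc_subset_uIcc hθ)
    have hzc : ‖z‖ ≤ ‖c‖ + 1 := norm_le_of_mem_closedBall (Metric.ball_subset_closedBall hz)
    have hexp : ‖Complex.exp (z * u θ)‖ ≤ Real.exp ((‖c‖ + 1) * B) := by
      refine (Complex.norm_exp_le_exp_norm _).trans (Real.exp_le_exp.2 ?_)
      rw [norm_mul]
      gcongr
    have hnorm : ‖Complex.exp (-(j * θ) * Complex.I)‖ = 1 := by
      simpa using Complex.norm_exp_ofReal_mul_I (-(j * θ))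
    have hB0 : 0 ≤ B := (norm_nonneg _).trans huB
    rw [norm_mul, hnorm, mul_one, norm_mul, norm_mul, ← mul_assoc]
    gcongr
  refine (intervalIntegral.hasDerivAt_integral_of_dominated_loc_of_deriv_le
    (F' := fun z θ => u θ * (Complex.exp (z * u θ) * g θ) * Complex.exp (-(j * θ) * Complex.I))
    (Metric.ball_mem_nhds c one_pos)
    (.of_forall fun z => (hintegrand z).aestronglyMeasurable_restrict_uIoc) (hintegrand c) ?_
    (ae_of_all _ fun θ hθ z hz => hbound hz hθ) (hg.norm.const_mul _)
    (ae_of_all _ fun θ _ z _ => ?_)).2.const_mul _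
  · have := hg.aestronglyMeasurable_restrict_uIoc
    fun_prop
  · convert! ((((hasDerivAt_id z).mul_const (u θ)).cexp).mul_const (g θ)).mul_const
      (Complex.exp (-(j * θ) * Complex.I)) using 1
    simp only [id]
    ring

/-- The norm of a symbol in the Wiener algebra, with values in `ℝ≥0∞` so that estimates need no
summability side conditions. -/
noncomputable def wienerNorm (f : ℝ → ℂ) : ENNReal :=
  ∑' j : ℤ, ‖toeplitzCoeff f j‖ₑ

theorem wienerNorm_one : wienerNorm 1 = 1 := by
  simp [wienerNorm, toeplitzCoeff_one, apply_ite enorm]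

theorem wienerNorm_mul_le {ι : Type*} [Countable ι] {u : ι → ℂ}
    (hu : Summable fun m => ‖u m‖) {s : ι → ℤ} {h : ℝ → ℂ}
    (hh : ∀ θ : ℝ, HasSum (fun m => u m * Complex.exp (s m * θ * Complex.I)) (h θ))
    (hg : IntervalIntegrable g volume 0 (2 * π)) :
    wienerNorm (fun θ => h θ * g θ) ≤ (∑' m, ‖u m‖ₑ) * wienerNorm g :=
  calc ∑' j, ‖toeplitzCoeff (fun θ => h θ * g θ) j‖ₑ
      ≤ ∑' j, ∑' m, ‖u m‖ₑ * ‖toeplitzCoeff g (j - s m)‖ₑ := by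
        refine ENNReal.tsum_le_tsum fun j => ?_
        rw [← (hasSum_toeplitzCoeff_mul hu hh hg j).tsum_eq]
        simp only [← enorm_mul]
        exact enorm_tsum_le_tsum_enorm
    _ = ∑' m, ‖u m‖ₑ * ∑' j, ‖toeplitzCoeff g (j - s m)‖ₑ := by
        rw [ENNReal.tsum_comm]
        simp only [ENNReal.tsum_mul_left]
    _ = ∑' m, ‖u m‖ₑ * wienerNorm g :=
        tsum_congr fun m => congrArg _
          ((Equiv.subRight (s m)).tsum_eq fun j => ‖toeplitzCoeff g j‖ₑ)
    _ = (∑' m, ‖u m‖ₑ) * wienerNorm g := ENNReal.tsum_mul_right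

end FourierCoefficients

section ExpTwist

variable {g : ℝ → ℂ}

/-- The symbol `exp (c z ^ s) g(z)` at `z = e^{iθ}`. -/
noncomputable def expTwist (s : ℤ) (c : ℂ) (g : ℝ → ℂ) (θ : ℝ) : ℂ :=
  Complex.exp (c * Complex.exp (s * θ * Complex.I)) * g θ

theorem expTwist_zero (s : ℤ) (g : ℝ → ℂ) : expTwist s 0 g = g := by
  ext θ
  simp [expTwist]

theorem expTwist_comm (s t : ℤ) (c d : ℂ) (g : ℝ → ℂ) :
    expTwist s c (expTwist t d g) = expTwist t d (expTwist s c g) := by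
  ext θ
  exact mul_left_comm _ _ _

theorem expTwist_neg_expTwist (s : ℤ) (c : ℂ) (g : ℝ → ℂ) :
    expTwist s (-c) (expTwist s c g) = g := by
  ext θ
  simp [expTwist, ← mul_assoc, ← Complex.exp_add]

theorem intervalIntegrable_expTwist (hg : IntervalIntegrable g volume 0 (2 * π)) (s : ℤ) (c : ℂ) :
    IntervalIntegrable (expTwist s c g) volume 0 (2 * π) :=
  hg.continuousOn_mul (by fun_prop)

theorem summable_norm_pow_div_factorial (c : ℂ) :
    Summable fun m : ℕ => ‖c ^ m / m.factorial‖ := by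
  simpa using Real.summable_pow_div_factorial ‖c‖

theorem hasSum_exp_mul_exp_int (s : ℤ) (c : ℂ) (θ : ℝ) :
    HasSum (fun m : ℕ => c ^ m / m.factorial * Complex.exp ((s * m : ℤ) * θ * Complex.I))
      (Complex.exp (c * Complex.exp (s * θ * Complex.I))) := by
  rw [Complex.exp_eq_exp_ℂ]
  refine (NormedSpace.expSeries_div_hasSum_exp _).congr_fun fun m => ?_
  rw [← Complex.exp_eq_exp_ℂ, mul_pow, ← Complex.exp_nat_mul, mul_div_right_comm]
  congr 2
  push_cast
  ring

theorem hasSum_toeplitzCoeff_expTwist (hg : IntervalIntegrable g volume 0 (2 * π))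
    (s : ℤ) (c : ℂ) (j : ℤ) :
    HasSum (fun m : ℕ => c ^ m / m.factorial * toeplitzCoeff g (j - s * m))
      (toeplitzCoeff (expTwist s c g) j) :=
  hasSum_toeplitzCoeff_mul (summable_norm_pow_div_factorial c) (hasSum_exp_mul_exp_int s c) hg j

theorem toeplitzCoeff_expTwist_eq_self (hg : IntervalIntegrable g volume 0 (2 * π))
    {s j : ℤ} (hj : ∀ m : ℕ, m ≠ 0 → toeplitzCoeff g (j - s * m) = 0) (c : ℂ) :
    toeplitzCoeff (expTwist s c g) j = toeplitzCoeff g j := by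
  refine (hasSum_toeplitzCoeff_expTwist hg s c j).unique ?_
  simpa using hasSum_single (f := fun m : ℕ => c ^ m / m.factorial * toeplitzCoeff g (j - s * m)) 0
    fun m hm => by rw [hj m hm, mul_zero]

theorem hasDerivAt_toeplitzCoeff_expTwist (hg : IntervalIntegrable g volume 0 (2 * π))
    (s : ℤ) (c : ℂ) (j : ℤ) :
    HasDerivAt (fun z => toeplitzCoeff (expTwist s z g) j)
      (toeplitzCoeff (expTwist s c g) (j - s)) c := by
  rw [← toeplitzCoeff_exp_int_mul]
  exact hasDerivAt_toeplitzCoeff_exp_mul (by fun_prop) hg c j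

theorem tsum_enorm_pow_div_factorial_add_le (c : ℂ) (k : ℕ) :
    ∑' m : ℕ, ‖c ^ (m + k) / (m + k).factorial‖ₑ ≤
      ENNReal.ofReal (‖c‖ ^ k / k.factorial * Real.exp ‖c‖) := by
  have hterm (m : ℕ) : ‖c ^ (m + k) / (m + k).factorial‖ ≤
      ‖c‖ ^ k / k.factorial * (‖c‖ ^ m / m.factorial) := by
    have hfac : (k.factorial * m.factorial : ℝ) ≤ (m + k).factorial := by
      rw [add_comm m k]
      exact_mod_cast Nat.le_of_dvd (Nat.factorial_pos _)
        (Nat.factorial_mul_factorial_dvd_factorial_add k m)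
    rw [norm_div, norm_pow, Complex.norm_natCast, div_mul_div_comm, ← pow_add, add_comm k m]
    gcongr
  have hexp : HasSum (fun m : ℕ => ‖c‖ ^ k / k.factorial * (‖c‖ ^ m / m.factorial))
      (‖c‖ ^ k / k.factorial * Real.exp ‖c‖) := by
    rw [Real.exp_eq_exp_ℝ]
    exact (NormedSpace.expSeries_div_hasSum_exp ‖c‖).mul_left _
  rw [← hexp.tsum_eq, ENNReal.ofReal_tsum_of_nonneg (fun m => by positivity) hexp.summable]
  exact ENNReal.tsum_le_tsum fun m => by
    rw [← ofReal_norm]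
    exact ENNReal.ofReal_le_ofReal (hterm m)

theorem wienerNorm_expTwist_le (hg : IntervalIntegrable g volume 0 (2 * π)) (s : ℤ) (c : ℂ) :
    wienerNorm (expTwist s c g) ≤ ENNReal.ofReal (Real.exp ‖c‖) * wienerNorm g := by
  refine (wienerNorm_mul_le (summable_norm_pow_div_factorial c) (hasSum_exp_mul_exp_int s c)
    hg).trans ?_
  gcongr
  simpa using tsum_enorm_pow_div_factorial_add_le c 0

end ExpTwist

section ToeplitzDeterminants

variable {f g : ℝ → ℂ}

/-- The rows, indexed by all `j : ℤ`, of the first `n` columns of the bi-infinite Toeplitz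
matrix. -/
noncomputable def toeplitzRow (f : ℝ → ℂ) (n : ℕ) (j : ℤ) (k : Fin n) : ℂ :=
  toeplitzCoeff f (j - (k : ℤ))

/-- The matrix whose determinant is `toeplitzDet f n`. -/
noncomputable def toeplitzMatrix (f : ℝ → ℂ) (n : ℕ) : Matrix (Fin n) (Fin n) ℂ :=
  Matrix.of fun j => toeplitzRow f n j

theorem det_toeplitzMatrix (f : ℝ → ℂ) (n : ℕ) : (toeplitzMatrix f n).det = toeplitzDet f n := rfl

theorem toeplitzDet_eq_pow (hf : ∀ j > 0, toeplitzCoeff f j = 0) (n : ℕ) :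
    toeplitzDet f n = toeplitzCoeff f 0 ^ n := by
  rw [← det_toeplitzMatrix, Matrix.det_of_isUpperTriangular]
  · simp [toeplitzMatrix, toeplitzRow]
  · intro j k hkj
    have hlt : (k : ℕ) < j := hkj
    exact hf _ (by lia)

theorem hasDerivAt_toeplitzDet_expTwist (hg : IntervalIntegrable g volume 0 (2 * π))
    (c : ℂ) (N : ℕ) :
    HasDerivAt (fun z => toeplitzDet (expTwist 1 z g) (N + 1))
      ((toeplitzMatrix (expTwist 1 c g) (N + 1)).updateRow 0
        (toeplitzRow (expTwist 1 c g) (N + 1) (-1))).det c := by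
  have hentry (j k : Fin (N + 1)) :
      HasDerivAt (fun z => toeplitzMatrix (expTwist 1 z g) (N + 1) j k)
        (toeplitzRow (expTwist 1 c g) (N + 1) (j - 1) k) c := by
    simpa only [toeplitzMatrix, Matrix.of_apply, toeplitzRow, sub_right_comm] using
      hasDerivAt_toeplitzCoeff_expTwist hg 1 c (j - k)
  have hdet := hasDerivAt_matrix_det (M := fun z => toeplitzMatrix (expTwist 1 z g) (N + 1))
    (M' := fun j => toeplitzRow (expTwist 1 c g) (N + 1) (j - 1)) hentry
  rw [Fin.sum_univ_succ, Finset.sum_eq_zero, add_zero] at hdet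
  · simpa [det_toeplitzMatrix] using hdet
  · intro j _
    refine Matrix.det_zero_of_row_eq (i := j.castSucc) (j := j.succ) j.castSucc_lt_succ.ne ?_
    rw [Matrix.updateRow_self, Matrix.updateRow_ne j.castSucc_lt_succ.ne]
    ext k
    simp [toeplitzMatrix]

theorem sum_enorm_toeplitzRow_le (f : ℝ → ℂ) (n : ℕ) (j : ℤ) :
    ∑ k, ‖toeplitzRow f n j k‖ₑ ≤ wienerNorm f := by
  have hinj : Function.Injective fun k : Fin n => j - (k : ℤ) := fun k l h => by
    simpa [Fin.ext_iff] using h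
  rw [← tsum_fintype (L := .unconditional _)]
  exact ENNReal.tsum_comp_le_tsum_of_injective hinj fun j => ‖toeplitzCoeff f j‖ₑ

theorem enorm_det_updateRow_toeplitzMatrix_le (f : ℝ → ℂ) {N : ℕ} (i : Fin (N + 1))
    (v : Fin (N + 1) → ℂ) :
    ‖((toeplitzMatrix f (N + 1)).updateRow i v).det‖ₑ ≤ (∑ k, ‖v k‖ₑ) * wienerNorm f ^ N := by
  refine (enorm_det_le_prod_sum_enorm _).trans ?_
  rw [Fin.prod_univ_succAbove _ i]
  simp only [Matrix.updateRow_self, Matrix.updateRow_ne (Fin.succAbove_ne i _)]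
  gcongr
  simpa [toeplitzMatrix] using Finset.prod_le_pow_card Finset.univ _ _ fun j _ =>
    sum_enorm_toeplitzRow_le f (N + 1) (i.succAbove j)

section RowRecurrence

variable {β : ℕ → ℂ}

/-- The part `∑ β_m • row (m - 1)`, `m ≥ N + 2`, of a linear recurrence between the rows of a
Toeplitz matrix that lies below the section of size `N + 1`. -/
noncomputable def toeplitzRowTail (β : ℕ → ℂ) (f : ℝ → ℂ) (N : ℕ) (k : Fin (N + 1)) : ℂ :=
  ∑' m : ℕ, β (m + (N + 2)) * toeplitzRow f (N + 1) (m + (N + 1)) k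

theorem sum_enorm_toeplitzRowTail_le (β : ℕ → ℂ) (f : ℝ → ℂ) (N : ℕ) :
    ∑ k, ‖toeplitzRowTail β f N k‖ₑ ≤ (∑' m, ‖β (m + (N + 2))‖ₑ) * wienerNorm f :=
  calc ∑ k, ‖toeplitzRowTail β f N k‖ₑ
      ≤ ∑ k, ∑' m : ℕ, ‖β (m + (N + 2))‖ₑ * ‖toeplitzRow f (N + 1) (m + (N + 1)) k‖ₑ :=
        Finset.sum_le_sum fun k _ => by
          simp only [← enorm_mul]
          exact enorm_tsum_le_tsum_enorm
    _ = ∑' m : ℕ, ‖β (m + (N + 2))‖ₑ * ∑ k, ‖toeplitzRow f (N + 1) (m + (N + 1)) k‖ₑ := by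
        rw [← Summable.tsum_finsetSum fun _ _ => ENNReal.summable]
        simp only [Finset.mul_sum]
    _ ≤ ∑' m : ℕ, ‖β (m + (N + 2))‖ₑ * wienerNorm f := by
        gcongr
        exact sum_enorm_toeplitzRow_le f _ _
    _ = (∑' m, ‖β (m + (N + 2))‖ₑ) * wienerNorm f := ENNReal.tsum_mul_right

theorem toeplitzRow_neg_one_eq (hβ : β 0 = 1)
    (hf : ∀ j < 0, HasSum (fun m : ℕ => β m * toeplitzCoeff f (j + m)) 0) (N : ℕ) :
    toeplitzRow f (N + 1) (-1) =
      ∑ j : Fin (N + 1), (-β (j + 1)) • toeplitzMatrix f (N + 1) j +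
        (-1 : ℂ) • toeplitzRowTail β f N := by
  ext k
  have hrec : HasSum (fun m : ℕ => β m * toeplitzRow f (N + 1) (m - 1) k) 0 := by
    refine (hf (-1 - k) (by lia)).congr_fun fun m => ?_
    rw [toeplitzRow]
    ring_nf
  have hsplit := hrec.summable.sum_add_tsum_nat_add (N + 2)
  rw [hrec.tsum_eq, Finset.sum_range_succ', ← Fin.sum_univ_eq_sum_range
    (fun m : ℕ => β (m + 1) * toeplitzRow f (N + 1) ((m + 1 : ℕ) - 1) k)] at hsplit
  have hindex (m : ℕ) : ((m + (N + 2) : ℕ) : ℤ) - 1 = m + (N + 1) := by lia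
  simp only [hindex, hβ, Nat.cast_add_one, add_sub_cancel_right, Nat.cast_zero, zero_sub,
    one_mul] at hsplit
  simp only [Pi.add_apply, Finset.sum_apply, Pi.smul_apply, smul_eq_mul, neg_mul,
    Finset.sum_neg_distrib, toeplitzMatrix, Matrix.of_apply, toeplitzRowTail]
  linear_combination hsplit

theorem det_updateRow_toeplitzRow_neg_one (hβ : β 0 = 1)
    (hf : ∀ j < 0, HasSum (fun m : ℕ => β m * toeplitzCoeff f (j + m)) 0) (N : ℕ) :
    ((toeplitzMatrix f (N + 1)).updateRow 0 (toeplitzRow f (N + 1) (-1))).det =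
      -β 1 * toeplitzDet f (N + 1) -
        ((toeplitzMatrix f (N + 1)).updateRow 0 (toeplitzRowTail β f N)).det := by
  rw [toeplitzRow_neg_one_eq hβ hf, Matrix.det_updateRow_add, Matrix.det_updateRow_sum,
    Matrix.det_updateRow_smul, det_toeplitzMatrix]
  simp [sub_eq_add_neg]

theorem enorm_det_updateRow_toeplitzRowTail_le (β : ℕ → ℂ) (f : ℝ → ℂ) (N : ℕ) :
    ‖((toeplitzMatrix f (N + 1)).updateRow 0 (toeplitzRowTail β f N)).det‖ₑ ≤
      (∑' m, ‖β (m + (N + 2))‖ₑ) * wienerNorm f ^ (N + 1) := by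
  refine (enorm_det_updateRow_toeplitzMatrix_le f 0 _).trans ?_
  rw [pow_succ', ← mul_assoc]
  gcongr
  exact sum_enorm_toeplitzRowTail_le β f N

end RowRecurrence

end ToeplitzDeterminants

section Asymptotics

variable {g : ℝ → ℂ} {b : ℂ}

/-- The remainder in the differential equation `∂D/∂a = b D - R` for the Toeplitz determinant `D` of
size `N + 1` with symbol `exp (a z) g(z)`. -/
noncomputable def expTwistRemainder (b : ℂ) (g : ℝ → ℂ) (N : ℕ) (a : ℂ) : ℂ :=
  ((toeplitzMatrix (expTwist 1 a g) (N + 1)).updateRow 0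
    (toeplitzRowTail (fun m => (-b) ^ m / m.factorial) (expTwist 1 a g) N)).det

theorem hasSum_toeplitzCoeff_expTwist_of_neg (hg : IntervalIntegrable g volume 0 (2 * π))
    (hneg : ∀ j < 0, toeplitzCoeff (expTwist (-1) (-b) g) j = 0) (a : ℂ) {j : ℤ} (hj : j < 0) :
    HasSum (fun m : ℕ => (-b) ^ m / m.factorial * toeplitzCoeff (expTwist 1 a g) (j + m)) 0 := by
  have hzero : toeplitzCoeff (expTwist (-1) (-b) (expTwist 1 a g)) j = 0 := by
    rw [expTwist_comm, toeplitzCoeff_expTwist_eq_self (intervalIntegrable_expTwist hg _ _)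
      fun m _ => hneg _ (by lia), hneg j hj]
  rw [← hzero]
  simpa using hasSum_toeplitzCoeff_expTwist (intervalIntegrable_expTwist hg 1 a) (-1) (-b) j

theorem hasDerivAt_toeplitzDet_expTwist_mul_exp (hg : IntervalIntegrable g volume 0 (2 * π))
    (hneg : ∀ j < 0, toeplitzCoeff (expTwist (-1) (-b) g) j = 0) (a : ℂ) (N : ℕ) :
    HasDerivAt (fun z => toeplitzDet (expTwist 1 z g) (N + 1) * Complex.exp (-(z * b)))
      (-expTwistRemainder b g N a * Complex.exp (-(a * b))) a := by
  have hdet := hasDerivAt_toeplitzDet_expTwist hg a N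
  rw [det_updateRow_toeplitzRow_neg_one (β := fun m => (-b) ^ m / m.factorial) (by simp)
    fun j hj => hasSum_toeplitzCoeff_expTwist_of_neg hg hneg a hj] at hdet
  convert! hdet.mul ((hasDerivAt_id a).mul_const b).neg.cexp using 1
  simp [expTwistRemainder]
  ring

theorem norm_expTwistRemainder_le (hg : IntervalIntegrable g volume 0 (2 * π))
    (hfin : wienerNorm g ≠ ⊤) (b a : ℂ) (N : ℕ) :
    ‖expTwistRemainder b g N a‖ ≤ ‖b‖ ^ (N + 2) / (N + 2).factorial * Real.exp ‖b‖ *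
      (Real.exp ‖a‖ * (wienerNorm g).toReal) ^ (N + 1) := by
  rw [← ENNReal.ofReal_le_ofReal_iff (by positivity), ofReal_norm]
  calc ‖expTwistRemainder b g N a‖ₑ
      ≤ (∑' m, ‖(-b) ^ (m + (N + 2)) / (m + (N + 2)).factorial‖ₑ) *
          wienerNorm (expTwist 1 a g) ^ (N + 1) :=
        enorm_det_updateRow_toeplitzRowTail_le _ _ _
    _ ≤ ENNReal.ofReal (‖b‖ ^ (N + 2) / (N + 2).factorial * Real.exp ‖b‖) *
          (ENNReal.ofReal (Real.exp ‖a‖) * wienerNorm g) ^ (N + 1) := by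
        gcongr
        · simpa only [norm_neg] using tsum_enorm_pow_div_factorial_add_le (-b) (N + 2)
        · exact wienerNorm_expTwist_le hg 1 a
    _ = _ := by
        rw [ENNReal.ofReal_mul (p := _ * Real.exp ‖b‖) (by positivity),
          ENNReal.ofReal_pow (by positivity),
          ENNReal.ofReal_mul (by positivity : 0 ≤ Real.exp ‖a‖), ENNReal.ofReal_toReal hfin]

theorem norm_toeplitzDet_expTwist_mul_exp_sub_le (hg : IntervalIntegrable g volume 0 (2 * π))
    (hfin : wienerNorm g ≠ ⊤) (hneg : ∀ j < 0, toeplitzCoeff (expTwist (-1) (-b) g) j = 0)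
    (a : ℂ) (N : ℕ) :
    ‖toeplitzDet (expTwist 1 a g) (N + 1) * Complex.exp (-(a * b)) - toeplitzDet g (N + 1)‖ ≤
      ‖b‖ ^ (N + 2) / (N + 2).factorial * Real.exp ‖b‖ *
        (Real.exp ‖a‖ * (wienerNorm g).toReal) ^ (N + 1) * Real.exp (‖a‖ * ‖b‖) * ‖a‖ := by
  have hderiv_le {z : ℂ} (hz : z ∈ Metric.closedBall (0 : ℂ) ‖a‖) :
      ‖-expTwistRemainder b g N z * Complex.exp (-(z * b))‖ ≤
        ‖b‖ ^ (N + 2) / (N + 2).factorial * Real.exp ‖b‖ *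
          (Real.exp ‖a‖ * (wienerNorm g).toReal) ^ (N + 1) * Real.exp (‖a‖ * ‖b‖) := by
    have hza : ‖z‖ ≤ ‖a‖ := mem_closedBall_zero_iff.1 hz
    rw [norm_mul, norm_neg]
    gcongr
    · exact (norm_expTwistRemainder_le hg hfin b z N).trans (by gcongr)
    · refine (Complex.norm_exp_le_exp_norm _).trans ?_
      rw [norm_neg, norm_mul]
      gcongr
  simpa [expTwist_zero] using
    (convex_closedBall (0 : ℂ) ‖a‖).norm_image_sub_le_of_norm_hasDerivWithin_le
      (fun z _ => (hasDerivAt_toeplitzDet_expTwist_mul_exp hg hneg z N).hasDerivWithinAt)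
      (fun z hz => hderiv_le hz) (x := 0) (y := a) (by simp) (by simp)

theorem tendsto_toeplitzDet_expTwist_mul_exp_sub (hg : IntervalIntegrable g volume 0 (2 * π))
    (hfin : wienerNorm g ≠ ⊤) (hneg : ∀ j < 0, toeplitzCoeff (expTwist (-1) (-b) g) j = 0)
    (a : ℂ) :
    Tendsto (fun n => toeplitzDet (expTwist 1 a g) n * Complex.exp (-(a * b)) - toeplitzDet g n)
      atTop (nhds 0) := by
  set W := Real.exp ‖a‖ * (wienerNorm g).toReal
  have hfactorial : Tendsto (fun N : ℕ => (‖b‖ * W) ^ (N + 1) / (N + 1).factorial)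
      atTop (nhds 0) :=
    (tendsto_add_atTop_iff_nat 1).2 (FloorSemiring.tendsto_pow_div_factorial_atTop (‖b‖ * W))
  rw [← tendsto_add_atTop_iff_nat 1]
  refine squeeze_zero_norm
    (fun N => (norm_toeplitzDet_expTwist_mul_exp_sub_le hg hfin hneg a N).trans ?_)
    (by simpa using hfactorial.mul_const (‖b‖ * Real.exp ‖b‖ * Real.exp (‖a‖ * ‖b‖) * ‖a‖))
  calc ‖b‖ ^ (N + 2) / (N + 2).factorial * Real.exp ‖b‖ * W ^ (N + 1) *
        Real.exp (‖a‖ * ‖b‖) * ‖a‖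
      ≤ ‖b‖ ^ (N + 2) / (N + 1).factorial * Real.exp ‖b‖ * W ^ (N + 1) *
        Real.exp (‖a‖ * ‖b‖) * ‖a‖ := by
        gcongr
        lia
    _ = _ := by ring

end Asymptotics

/-- The strong Szegő limit theorem for the symbol `f(z) = exp(Vp z + Vm z⁻¹)`:
`D_n(f) e^{-Vp Vm} → 1` as `n → ∞`. -/
theorem szego_exp_laurent (Vp Vm : ℂ) :
    Tendsto
      (fun n : ℕ =>
        toeplitzDet
          (fun θ : ℝ =>
            Complex.exp (Vp * Complex.exp (θ * Complex.I)
              + Vm * Complex.exp (-θ * Complex.I))) n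
          * Complex.exp (-(Vp * Vm)))
      atTop (nhds 1) := by
  set g := expTwist (-1) Vm 1
  have hone : IntervalIntegrable (1 : ℝ → ℂ) volume 0 (2 * π) := intervalIntegrable_const
  have hsymbol : (fun θ : ℝ => Complex.exp (Vp * Complex.exp (θ * Complex.I)
      + Vm * Complex.exp (-θ * Complex.I))) = expTwist 1 Vp g := by
    ext θ
    simp [g, expTwist, Complex.exp_add]
  have hfin : wienerNorm g ≠ ⊤ := ne_top_of_le_ne_top (by simp [wienerNorm_one])
    (wienerNorm_expTwist_le hone (-1) Vm)
  have hneg (j : ℤ) (hj : j < 0) : toeplitzCoeff (expTwist (-1) (-Vm) g) j = 0 := by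
    rw [expTwist_neg_expTwist, toeplitzCoeff_one, if_neg hj.ne]
  have hcoeff (j : ℤ) (hj : 0 ≤ j) : toeplitzCoeff g j = if j = 0 then 1 else 0 := by
    rw [toeplitzCoeff_expTwist_eq_self hone, toeplitzCoeff_one]
    intro m hm
    rw [toeplitzCoeff_one, if_neg (by lia)]
  have hdet (n : ℕ) : toeplitzDet g n = 1 := by
    rw [toeplitzDet_eq_pow (fun j hj => by rw [hcoeff j hj.le, if_neg hj.ne']), hcoeff 0 le_rfl,
      if_pos rfl, one_pow]
  have hg := intervalIntegrable_expTwist hone (-1) Vm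
  rw [hsymbol, ← tendsto_sub_nhds_zero_iff]
  simpa only [g, hdet] using tendsto_toeplitzDet_expTwist_mul_exp_sub hg hfin hneg Vp
end

section
/- The Toeplitz determinant Δ_{n,λ} = D_n(exp(√λ (z + z^{−1}))) is Gessel's generating function for the longest increasing subsequence problem: Δ_{n,λ} = ∑_{N=0}^{∞} u_n(N) λ^N / (N!)², where u_n(N) is the number of permutations π in S_N whose longest increasing subsequence has length at most n. -/
open MeasureTheory

open scoped Real

/-- Fourier coefficient of the symbol `exp(√λ (z + z⁻¹))` on the unit circle. -/
noncomputable def gesselCoeff (lam : ℝ) (j : ℤ) : ℂ :=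
  (1 / (2 * (π : ℂ))) *
    ∫ θ in (0:ℝ)..(2 * π),
      Complex.exp ((Real.sqrt lam : ℂ) *
          (Complex.exp (θ * Complex.I) + Complex.exp (-θ * Complex.I))) *
        Complex.exp (-(j * θ) * Complex.I)

/-- The Toeplitz determinant `Δ_{n,λ} = D_n(exp(√λ (z + z⁻¹)))`. -/
noncomputable def gesselDet (lam : ℝ) (n : ℕ) : ℂ :=
  Matrix.det (Matrix.of fun j k : Fin n => gesselCoeff lam ((j : ℤ) - (k : ℤ)))

/-- `u_n(N)`: the number of permutations of `{1,…,N}` whose longest increasing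
subsequence has length at most `n`. -/
noncomputable def permCount (n N : ℕ) : ℕ :=
  Nat.card {σ : Equiv.Perm (Fin N) //
    ∀ s : Finset (Fin N), StrictMonoOn σ ↑s → s.card ≤ n}

/-!
On the torus, the Toeplitz determinant of a symbol `f` is the Fourier coefficient at the exponent
`δ = (0, -1, …, -(n - 1))` of `∏ i, f (z i)` times the alternant `a_δ`. For `f = exp (s (z + z⁻¹))`
the product is `exp (s p₁) exp (s p₋₁)`, where `p_m = ∑ i, z i ^ m`. By Pieri's rule, multiplying
`a_δ` by `p₁` adds one cell to a Young diagram, so expanding both exponentials produces pairs of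
standard Young tableaux of a common shape with at most `n` columns. The Robinson–Schensted
correspondence, constructed through Fomin's growth diagrams, matches these pairs with the
permutations whose increasing subsequences have length at most `n`.
-/

/-! ### Fourier coefficients on the torus -/

section Torus

open UnitAddTorus

variable {d : Type*} [Fintype d]

/-- The `i`-th coordinate of a point of the torus, as a continuous function. -/
abbrev torusCoord (i : d) : C(UnitAddTorus d, UnitAddCircle) := ContinuousMap.eval i

lemma mFourier_mul_mFourier (m v : d → ℤ) : mFourier m * mFourier v = mFourier (m + v) :=
  ContinuousMap.ext fun _ => mFourier_add.symm

lemma mFourierCoeff_eq_integral_pi (F : C(UnitAddTorus d, ℂ)) (v : d → ℤ) :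
    mFourierCoeff F v =
      ∫ t, (mFourier (-v) * F) t ∂Measure.pi fun _ => AddCircle.haarAddCircle :=
  rfl

lemma mFourierCoeff_add (F G : C(UnitAddTorus d, ℂ)) (v : d → ℤ) :
    mFourierCoeff ⇑(F + G) v = mFourierCoeff F v + mFourierCoeff G v := by
  have integrable : ∀ H : C(UnitAddTorus d, ℂ),
      Integrable H (Measure.pi fun _ => AddCircle.haarAddCircle) := fun H =>
    H.continuous.integrable_of_hasCompactSupport (.of_compactSpace _)
  simp only [mFourierCoeff_eq_integral_pi, mul_add, ContinuousMap.add_apply]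
  exact integral_add (integrable (mFourier (-v) * F)) (integrable (mFourier (-v) * G))

lemma mFourierCoeff_smul (c : ℂ) (F : C(UnitAddTorus d, ℂ)) (v : d → ℤ) :
    mFourierCoeff ⇑(c • F) v = c • mFourierCoeff F v := by
  simp only [mFourierCoeff_eq_integral_pi, mul_smul_comm, ContinuousMap.smul_apply, integral_smul]

lemma norm_mFourierCoeff_le (F : C(UnitAddTorus d, ℂ)) (v : d → ℤ) :
    ‖mFourierCoeff F v‖ ≤ ‖F‖ := by
  rw [mFourierCoeff_eq_integral_pi]
  refine (norm_integral_le_of_norm_le_const (C := ‖F‖) (.of_forall fun t => ?_)).trans_eq ?_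
  · calc ‖(mFourier (-v) * F) t‖ ≤ ‖mFourier (-v) * F‖ := ContinuousMap.norm_coe_le_norm _ t
      _ ≤ ‖mFourier (-v)‖ * ‖F‖ := norm_mul_le _ _
      _ = ‖F‖ := by rw [mFourier_norm, one_mul]
  · rw [probReal_univ, mul_one]

/-- The Fourier coefficient `mFourierCoeff` at the frequency `v`, as a continuous linear functional
on the continuous functions on the torus. -/
noncomputable def torusCoeff (v : d → ℤ) : C(UnitAddTorus d, ℂ) →L[ℂ] ℂ :=
  LinearMap.mkContinuous
    { toFun := fun F => mFourierCoeff F v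
      map_add' := fun F G => mFourierCoeff_add F G v
      map_smul' := fun c F => mFourierCoeff_smul c F v }
    1 fun F => (norm_mFourierCoeff_le F v).trans_eq (one_mul _).symm

lemma torusCoeff_apply (v : d → ℤ) (F : C(UnitAddTorus d, ℂ)) :
    torusCoeff v F = ∫ t, (mFourier (-v) * F) t ∂Measure.pi fun _ => AddCircle.haarAddCircle :=
  rfl

lemma torusCoeff_mFourier_mul (v m : d → ℤ) (F : C(UnitAddTorus d, ℂ)) :
    torusCoeff v (mFourier m * F) = torusCoeff (v - m) F := by
  rw [torusCoeff_apply, torusCoeff_apply, ← mul_assoc, mFourier_mul_mFourier, neg_sub,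
    sub_eq_neg_add]

lemma torusCoeff_prod_comp_eval (f : d → C(UnitAddCircle, ℂ)) (v : d → ℤ) :
    torusCoeff v (∏ i, (f i).comp (torusCoord i)) = ∏ i, fourierCoeff (f i) (v i) := by
  simp only [torusCoeff_apply, fourierCoeff, ← integral_fintype_prod_eq_prod]
  simp [mFourier, Finset.prod_mul_distrib, ContinuousMap.prod_apply]

lemma mFourier_eq_prod (m : d → ℤ) :
    mFourier m = ∏ i, (fourier (m i)).comp (torusCoord i) := by
  ext t
  simp [mFourier, ContinuousMap.prod_apply]

lemma torusCoeff_mFourier (v m : d → ℤ) :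
    torusCoeff v (mFourier m) = if v = m then 1 else 0 := by
  classical
  rw [mFourier_eq_prod, torusCoeff_prod_comp_eval]
  simp only [fourierCoeff_fourier, Pi.single_apply, Finset.prod_ite_zero, Finset.mem_univ,
    forall_true_left, Finset.prod_const_one, funext_iff]

end Torus

/-! ### Alternants and power sums -/

section Alternant

open UnitAddTorus Matrix

variable {d : Type*} [Fintype d] [DecidableEq d]

/-- The alternant `det (z_j ^ x_i)` of a vector of exponents, as a function on the torus. -/
noncomputable def alternant (x : d → ℤ) : C(UnitAddTorus d, ℂ) :=
  det (of fun i j => (fourier (x i)).comp (torusCoord j))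

lemma alternant_eq_sum (x : d → ℤ) :
    alternant x = ∑ σ : Equiv.Perm d, Equiv.Perm.sign σ • mFourier (x ∘ σ) := by
  simp only [alternant, det_apply, of_apply, mFourier_eq_prod, Function.comp_apply]

lemma alternant_of_not_injective {x : d → ℤ} (hx : ¬Function.Injective x) : alternant x = 0 := by
  simp only [Function.Injective, not_forall] at hx
  obtain ⟨i, j, hij, hne⟩ := hx
  exact det_zero_of_row_eq hne (funext fun k => by simp only [of_apply, hij])

lemma torusCoeff_alternant (v x : d → ℤ) :
    torusCoeff v (alternant x) =
      ∑ σ : Equiv.Perm d, Equiv.Perm.sign σ • if v = x ∘ σ then (1 : ℂ) else 0 := by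
  simp only [alternant_eq_sum, map_sum, Units.smul_def, map_zsmul, torusCoeff_mFourier]

lemma torusCoeff_alternant_of_not_injective {v : d → ℤ} (hv : ¬Function.Injective v)
    (x : d → ℤ) : torusCoeff v (alternant x) = 0 := by
  by_cases hx : Function.Injective x
  · have ne : ∀ σ : Equiv.Perm d, v ≠ x ∘ σ := fun σ h => hv (h ▸ hx.comp σ.injective)
    simp only [torusCoeff_alternant, if_neg (ne _), smul_zero, Finset.sum_const_zero]
  · rw [alternant_of_not_injective hx, map_zero]

lemma torusCoeff_alternant_of_strictAnti [LinearOrder d] {v x : d → ℤ} (hv : StrictAnti v)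
    (hx : StrictAnti x) : torusCoeff v (alternant x) = if v = x then 1 else 0 := by
  have eq_comp_iff : ∀ σ : Equiv.Perm d, v = x ∘ σ ↔ σ = 1 ∧ v = x := fun σ => by
    refine ⟨fun h => ?_, fun ⟨hσ, h⟩ => by rw [hσ, h]; rfl⟩
    have v_eq : v = x := (hv.range_inj hx).mp (by rw [h, σ.surjective.range_comp])
    exact ⟨Equiv.ext fun i => hx.injective (congr_fun (h.symm.trans v_eq) i), v_eq⟩
  rw [torusCoeff_alternant, Fintype.sum_eq_single 1]
  · simp only [eq_comp_iff, true_and, Equiv.Perm.sign_one, one_smul]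
  · intro σ hσ
    rw [if_neg fun h => hσ ((eq_comp_iff σ).mp h).1, smul_zero]

/-- The power sum `∑ i, z_i ^ m`, as a function on the torus. -/
noncomputable def powerSum (d : Type*) [Fintype d] [DecidableEq d] (m : ℤ) :
    C(UnitAddTorus d, ℂ) :=
  ∑ i, mFourier (Pi.single i m)

lemma powerSum_mul_mFourier_comp (m : ℤ) (x : d → ℤ) (σ : Equiv.Perm d) :
    powerSum d m * mFourier (x ∘ σ) = ∑ i, mFourier ((x + Pi.single i m) ∘ σ) := by
  have shift : ∀ i, Pi.single i m + x ∘ σ = (x + Pi.single (σ i) m) ∘ σ := fun i => by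
    ext j
    simp [Pi.single_apply, add_comm, σ.injective.eq_iff]
  simp only [powerSum, Finset.sum_mul, mFourier_mul_mFourier, shift]
  exact Fintype.sum_equiv σ _ _ fun _ => rfl

lemma powerSum_mul_alternant (m : ℤ) (x : d → ℤ) :
    powerSum d m * alternant x = ∑ i, alternant (x + Pi.single i m) := by
  simp only [alternant_eq_sum, Finset.mul_sum, mul_smul_comm, powerSum_mul_mFourier_comp,
    Finset.smul_sum]
  exact Finset.sum_comm

lemma torusCoeff_powerSum_mul (v : d → ℤ) (m : ℤ) (F : C(UnitAddTorus d, ℂ)) :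
    torusCoeff v (powerSum d m * F) = ∑ i, torusCoeff (v - Pi.single i m) F := by
  simp only [powerSum, Finset.sum_mul, map_sum, torusCoeff_mFourier_mul]

lemma torusCoeff_powerSum_pow_mul_alternant_of_not_injective {v : d → ℤ}
    (hv : ¬Function.Injective v) (m : ℤ) (l : ℕ) (x : d → ℤ) :
    torusCoeff v (powerSum d m ^ l * alternant x) = 0 := by
  induction l generalizing x with
  | zero => rw [pow_zero, one_mul, torusCoeff_alternant_of_not_injective hv]
  | succ l ih =>
    rw [pow_succ, mul_assoc, powerSum_mul_alternant, Finset.mul_sum, map_sum]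
    exact Finset.sum_eq_zero fun i _ => ih _

lemma det_toeplitz_fourierCoeff (f : C(UnitAddCircle, ℂ)) (r : d → ℤ) :
    det (of fun j k => fourierCoeff f (r j - r k)) =
      torusCoeff (fun i => -r i)
        ((∏ i, f.comp (torusCoord i)) * alternant fun i => -r i) := by
  simp only [det_apply, alternant_eq_sum, Finset.mul_sum, mul_smul_comm, map_sum, Units.smul_def,
    map_zsmul, mul_comm _ (mFourier _), torusCoeff_mFourier_mul, torusCoeff_prod_comp_eval,
    of_apply, Pi.sub_apply, Function.comp_apply, neg_sub_neg]

end Alternant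

/-! ### Growth diagrams -/

/-- A saturated chain `⊥ = P 0 ⋖ P 1 ⋖ ⋯ ⋖ P N` of length `N`; in Young's lattice, a standard
tableau. It is encoded as a sequence that is constant from `N` on. -/
@[ext]
structure SaturatedChain (L : Type*) [PartialOrder L] [OrderBot L] (N : ℕ) where
  /-- The elements of the chain. -/
  toFun : ℕ → L
  zero : toFun 0 = ⊥
  covBy : ∀ t < N, toFun t ⋖ toFun (t + 1)
  const : ∀ t, N ≤ t → toFun t = toFun N

namespace SaturatedChain

variable {L : Type*} [PartialOrder L] [OrderBot L] {N : ℕ}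

/-- The last element of a saturated chain. -/
def last (P : SaturatedChain L N) : L := P.toFun N

lemma wcovBy (P : SaturatedChain L N) (t : ℕ) : P.toFun t ⩿ P.toFun (t + 1) := by
  rcases lt_or_ge t N with h | h
  · exact (P.covBy t h).wcovBy
  · exact (P.const t h).trans (P.const (t + 1) (h.trans t.le_succ)).symm ▸ .refl _

lemma toFun_sub_sub (P : SaturatedChain L N) (t : ℕ) : P.toFun (N - (N - t)) = P.toFun t := by
  rcases le_total t N with h | h
  · rw [Nat.sub_sub_self h]
  · rw [Nat.sub_eq_zero_of_le h, P.const t h, Nat.sub_zero]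

/-- A saturated chain without its last element. -/
def init (P : SaturatedChain L (N + 1)) : SaturatedChain L N where
  toFun t := P.toFun (min t N)
  zero := P.zero
  covBy t ht := by
    simpa only [min_eq_left ht.le, min_eq_left (Nat.succ_le_of_lt ht)]
      using P.covBy t (ht.trans N.lt_succ_self)
  const t ht := by simp only [min_eq_right ht, min_self]

lemma last_init (P : SaturatedChain L (N + 1)) : P.init.last = P.toFun N := by
  simp only [last, init, min_self]

/-- A saturated chain prolonged by an upper cover of its last element. -/
def snoc (P : SaturatedChain L N) (d : {d // P.last ⋖ d}) : SaturatedChain L (N + 1) where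
  toFun t := if t ≤ N then P.toFun t else d
  zero := P.zero
  covBy t ht := by
    obtain ht | rfl := Nat.lt_succ_iff_lt_or_eq.mp ht
    · simpa only [if_pos ht.le, if_pos (Nat.succ_le_of_lt ht)] using P.covBy t ht
    · simpa [last] using d.2
  const t ht := by rw [if_neg (Nat.lt_of_succ_le ht).not_ge, if_neg N.lt_succ_self.not_ge]

lemma last_snoc (P : SaturatedChain L N) (d : {d // P.last ⋖ d}) : (P.snoc d).last = d := by
  simp [last, snoc]

lemma init_snoc (P : SaturatedChain L N) (d : {d // P.last ⋖ d}) : (P.snoc d).init = P := by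
  ext t
  rcases le_total t N with h | h
  · simp [init, snoc, h]
  · simp [init, snoc, h, P.const t h]

/-- A saturated chain of length `N + 1` is one of length `N` with an upper cover of its end. -/
def succEquiv (L : Type*) [PartialOrder L] [OrderBot L] (N : ℕ) :
    SaturatedChain L (N + 1) ≃ (P : SaturatedChain L N) × {d // P.last ⋖ d} where
  toFun P := ⟨P.init, P.last, P.last_init ▸ P.covBy N N.lt_succ_self⟩
  invFun Pd := Pd.1.snoc Pd.2
  left_inv P := by
    ext t
    rcases le_or_gt t N with h | h
    · simp [init, snoc, h]
    · simp [init, snoc, last, h.not_ge, P.const t h]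
  right_inv Pd := Sigma.subtype_ext (init_snoc _ _) (last_snoc _ _)

instance : Unique (SaturatedChain L 0) where
  default := ⟨fun _ => ⊥, rfl, fun _ h => (Nat.not_lt_zero _ h).elim, fun _ _ => rfl⟩
  uniq P := SaturatedChain.ext (funext fun t => (P.const t t.zero_le).trans P.zero)

lemma last_zero (P : SaturatedChain L 0) : P.last = ⊥ := P.zero

variable [∀ m : L, Fintype {d // m ⋖ d}]

noncomputable instance instFintype : ∀ N, Fintype (SaturatedChain L N)
  | 0 => inferInstance
  | N + 1 => have := instFintype N; Fintype.ofEquiv _ (succEquiv L N).symm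

lemma sum_last_succ {M : Type*} [AddCommMonoid M] (g : L → M) (N : ℕ) :
    ∑ P : SaturatedChain L (N + 1), g P.last =
      ∑ P : SaturatedChain L N, ∑ d : {d // P.last ⋖ d}, g d := by
  rw [← (succEquiv L N).symm.sum_comp, Fintype.sum_sigma]
  exact Fintype.sum_congr _ _ fun P => Fintype.sum_congr _ _ fun d => by
    rw [succEquiv, Equiv.coe_fn_symm_mk, last_snoc]

end SaturatedChain

section Growth

/-- A lattice in Stanley's class of `1`-differential posets, presented by a choice, for every
element `m`, of a bijection from the lower covers of `m` and one more point `none` to the upper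
covers of `m`; it drives Fomin's local rule. -/
class DifferentialLattice (L : Type*) [Lattice L] where
  /-- The chosen bijection at `m`. -/
  coverEquiv (m : L) : Option {a // a ⋖ m} ≃ {d // m ⋖ d}

open DifferentialLattice

variable {L : Type*} [Lattice L]

section LocalRule

variable [DifferentialLattice L]

/-- Fomin's local rule for the corners of a unit cell, `a` at the lower left, `b` and `c` at the
two corners next to it and `d` opposite to it; `x` says whether the cell is marked. -/
inductive LocalRule (x : Prop) (a b c d : L) : Prop
  | sup (hx : ¬x) (hne : b ≠ c) (ha : a = b ⊓ c) (hd : d = b ⊔ c) (hab : a ⩿ b) (hac : a ⩿ c)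
  | rest (hx : ¬x) (hb : b = a) (hc : c = a) (hd : d = a)
  | bump (hx : ¬x) (hab : a ⋖ b) (hc : c = b) (hd : d = coverEquiv b (some ⟨a, hab⟩))
  | mark (hx : x) (hb : b = a) (hc : c = a) (hd : d = coverEquiv a none)

namespace LocalRule

variable {x x' : Prop} {a a' b c d d' : L}

lemma ne_coverEquiv (m : L) (k : Option {a // a ⋖ m}) : m ≠ (coverEquiv m k : L) :=
  (coverEquiv m k).2.ne

lemma right_unique (h : LocalRule x a b c d) (h' : LocalRule x a b c d') : d = d' := by
  rcases h with ⟨hx, hne, ha, rfl, hab, hac⟩ | ⟨hx, rfl, rfl, rfl⟩ | ⟨hx, hab, rfl, rfl⟩ |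
      ⟨hx, rfl, rfl, rfl⟩ <;>
    rcases h' with ⟨hx', hne', _, rfl, _, _⟩ | ⟨hx', _, _, rfl⟩ |
      ⟨hx', hab', hc', rfl⟩ | ⟨hx', _, _, rfl⟩ <;> grind [CovBy.ne]

lemma exists_right (hab : a ⩿ b) (hac : a ⩿ c) (hx : x → a = b ∧ a = c) :
    ∃ d, LocalRule x a b c d := by
  by_cases x_true : x
  · obtain ⟨rfl, rfl⟩ := hx x_true
    exact ⟨_, .mark x_true rfl rfl rfl⟩
  obtain rfl | hne := eq_or_ne b c
  · obtain rfl | hab := hab.eq_or_covBy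
    · exact ⟨_, .rest x_true rfl rfl rfl⟩
    · exact ⟨_, .bump x_true hab rfl rfl⟩
  · exact ⟨_, .sup x_true hne (hab.inf_eq hac hne).symm rfl hab hac⟩

lemma eq_iff_left (h : LocalRule x a b c d) : b = d ↔ a = c ∧ ¬x := by
  rcases h with ⟨hx, _, ha, rfl, _, _⟩ | ⟨hx, rfl, rfl, rfl⟩ | ⟨_, hab, rfl, rfl⟩ |
      ⟨hx, rfl, rfl, rfl⟩
  · rw [eq_comm, sup_eq_left, ← inf_eq_right, ← ha]
    simp [hx]
  · simp [hx]
  · exact iff_of_false (ne_coverEquiv _ _) fun h => hab.ne h.1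
  · exact iff_of_false (ne_coverEquiv _ _) fun h => h.2 hx

lemma symm (h : LocalRule x a b c d) : LocalRule x a c b d := by
  rcases h with ⟨hx, hne, ha, hd, hab, hac⟩ | ⟨hx, hb, hc, hd⟩ | ⟨hx, hab, rfl, hd⟩ |
      ⟨hx, hb, hc, hd⟩
  · exact .sup hx hne.symm (ha.trans (inf_comm _ _)) (hd.trans (sup_comm _ _)) hac hab
  · exact .rest hx hc hb hd
  · exact .bump hx hab rfl hd
  · exact .mark hx hc hb hd

lemma eq_iff_right (h : LocalRule x a b c d) : c = d ↔ a = b ∧ ¬x := h.symm.eq_iff_left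

lemma eq_of_mark (h : LocalRule x a b c d) (hx : x) : a = b ∧ a = c := by
  cases h <;> simp_all

lemma left_unique (h : LocalRule x a b c d) (h' : LocalRule x' a' b c d) :
    a = a' ∧ (x ↔ x') := by
  have coverEquiv_inj : ∀ {m : L} {k k' : Option {a // a ⋖ m}},
      (coverEquiv m k : L) = coverEquiv m k' → k = k' := fun h =>
    (coverEquiv _).injective (Subtype.ext h)
  rcases h with ⟨hx, hne, ha, _, _, _⟩ | ⟨hx, rfl, rfl, rfl⟩ | ⟨hx, hab, rfl, rfl⟩ |
      ⟨hx, rfl, rfl, rfl⟩ <;>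
    rcases h' with ⟨hx', hne', ha', _, _, _⟩ | ⟨hx', rfl, hc', hd'⟩ |
      ⟨hx', hab', hc', hd'⟩ | ⟨hx', rfl, hc', hd'⟩ <;>
    grind [CovBy.ne]

lemma of_not_mark (hx : ¬x) (hac : a ⩿ c) : LocalRule x a a c c := by
  obtain rfl | hne := eq_or_ne a c
  · exact .rest hx rfl rfl rfl
  · exact .sup hx hne (inf_eq_left.mpr hac.le).symm (sup_eq_right.mpr hac.le).symm (.refl _) hac

section Modular

variable [IsModularLattice L]

lemma left_wcovBy (h : LocalRule x a b c d) : b ⩿ d := by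
  rcases h with ⟨_, _, ha, rfl, hab, hac⟩ | ⟨_, rfl, rfl, rfl⟩ | ⟨_, hab, rfl, rfl⟩ |
      ⟨_, rfl, rfl, rfl⟩
  · obtain rfl | hac := hac.eq_or_covBy
    · simp [sup_eq_left.mpr hab.le]
    · exact (covBy_sup_of_inf_covBy_right (ha ▸ hac)).wcovBy
  · exact .refl _
  · exact (coverEquiv c _).2.wcovBy
  · exact (coverEquiv _ _).2.wcovBy

lemma right_wcovBy (h : LocalRule x a b c d) : c ⩿ d := h.symm.left_wcovBy

lemma exists_left (hbd : b ⩿ d) (hcd : c ⩿ d) : ∃ a x, LocalRule x a b c d ∧ a ⩿ b ∧ a ⩿ c := by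
  obtain rfl | hne := eq_or_ne b c
  · obtain rfl | hbd := hbd.eq_or_covBy
    · exact ⟨b, False, .rest not_false rfl rfl rfl, .refl _, .refl _⟩
    · obtain ⟨_ | k, hk⟩ := (coverEquiv b).surjective ⟨d, hbd⟩
      · exact ⟨b, True, .mark trivial rfl rfl (congrArg Subtype.val hk.symm), .refl _, .refl _⟩
      · exact ⟨k, False, .bump not_false k.2 rfl (congrArg Subtype.val hk.symm), k.2.wcovBy,
          k.2.wcovBy⟩
  · have hd := hbd.sup_eq hcd hne
    have hab : b ⊓ c ⩿ b := by
      obtain rfl | hcd := hcd.eq_or_covBy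
      · simp [inf_eq_left.mpr hbd.le]
      · exact (inf_covBy_of_covBy_sup_right (hd.symm ▸ hcd)).wcovBy
    have hac : b ⊓ c ⩿ c := by
      obtain rfl | hbd := hbd.eq_or_covBy
      · simp [inf_eq_right.mpr hcd.le]
      · exact (inf_covBy_of_covBy_sup_left (hd.symm ▸ hbd)).wcovBy
    exact ⟨b ⊓ c, False, .sup not_false hne rfl hd.symm hab hac, hab, hac⟩

end Modular

end LocalRule

end LocalRule

section Grid

/-- The assignment of values to the points of a quadrant with boundary values `bot` and `left`
that is filled in cell by cell, by applying `f` to the three corners already known. -/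
def fillGrid {S : Type*} (f : ℕ → ℕ → S → S → S → S) (bot left : ℕ → S) : ℕ → ℕ → S
  | 0, j => bot j
  | i + 1, 0 => left (i + 1)
  | i + 1, j + 1 => f i j (fillGrid f bot left i j) (fillGrid f bot left (i + 1) j)
      (fillGrid f bot left i (j + 1))

lemma exists_grid {S : Type*} (H V : ℕ → ℕ → S → S → Prop)
    (R : ℕ → ℕ → S → S → S → S → Prop) (bot left : ℕ → S) (h0 : bot 0 = left 0)
    (hV : ∀ j, V 0 j (bot j) (bot (j + 1))) (hH : ∀ i, H i 0 (left i) (left (i + 1)))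
    (step : ∀ i j a b c, H i j a b → V i j a c →
      ∃ d, R i j a b c d ∧ V (i + 1) j b d ∧ H i (j + 1) c d) :
    ∃ G : ℕ → ℕ → S, (∀ j, G 0 j = bot j) ∧ (∀ i, G i 0 = left i) ∧
      ∀ i j, R i j (G i j) (G (i + 1) j) (G i (j + 1)) (G (i + 1) (j + 1)) := by
  have : Nonempty S := ⟨bot 0⟩
  choose! f hf using step
  set G := fillGrid f bot left
  have G_bot : ∀ j, G 0 j = bot j := fun j => by simp only [G, fillGrid]
  have G_left : ∀ i, G i 0 = left i := by
    rintro (_ | i)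
    · rw [G_bot, h0]
    · simp only [G, fillGrid]
  have G_succ : ∀ i j, G (i + 1) (j + 1) = f i j (G i j) (G (i + 1) j) (G i (j + 1)) :=
    fun i j => by simp only [G, fillGrid]
  have row : ∀ i, (∀ j, V i j (G i j) (G i (j + 1))) → ∀ j, H i j (G i j) (G (i + 1) j) := by
    intro i hi j
    induction j with
    | zero => simpa only [G_left] using hH i
    | succ j ih => exact G_succ i j ▸ (hf _ _ _ _ _ ih (hi j)).2.2
  have col : ∀ i j, V i j (G i j) (G i (j + 1)) := by
    intro i
    induction i with
    | zero => simpa only [G_bot] using hV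
    | succ i ih => exact fun j => G_succ i j ▸ (hf _ _ _ _ _ (row i ih j) (ih j)).2.1
  exact ⟨G, G_bot, G_left, fun i j =>
    G_succ i j ▸ (hf _ _ _ _ _ (row i (col i) j) (col i j)).1⟩

end Grid

section IsGrowth

variable [DifferentialLattice L] [OrderBot L]

/-- `G` is the growth diagram of the set `X` of marked cells of the quadrant. The cell `(i, j)` has
the lower left corner `(i, j)`. -/
structure IsGrowth (X : ℕ → ℕ → Prop) (G : ℕ → ℕ → L) : Prop where
  bot : ∀ j, G 0 j = ⊥
  left : ∀ i, G i 0 = ⊥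
  rule : ∀ i j, LocalRule (X i j) (G i j) (G (i + 1) j) (G i (j + 1)) (G (i + 1) (j + 1))

namespace IsGrowth

variable {X X' : ℕ → ℕ → Prop} {G G' : ℕ → ℕ → L} {N i j : ℕ}

lemma transpose (h : IsGrowth X G) : IsGrowth (fun i j => X j i) (fun i j => G j i) :=
  ⟨h.left, h.bot, fun i j => (h.rule j i).symm⟩

lemma vstep_eq_iff (h : IsGrowth X G) (i j : ℕ) :
    G i j = G i (j + 1) ↔ ∀ i' < i, ¬X i' j := by
  induction i with
  | zero => simp [h.bot]
  | succ i ih => rw [(h.rule i j).eq_iff_left, ih, Nat.forall_lt_succ_right]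

lemma hstep_eq_iff (h : IsGrowth X G) (i j : ℕ) :
    G i j = G (i + 1) j ↔ ∀ j' < j, ¬X i j' := h.transpose.vstep_eq_iff j i

lemma unique (h : IsGrowth X G) (h' : IsGrowth X G') : G = G' := by
  ext i j
  induction i generalizing j with
  | zero => rw [h.bot, h'.bot]
  | succ i ih =>
    induction j with
    | zero => rw [h.left, h'.left]
    | succ j ihj =>
      have rule := h.rule i j
      rw [ih j, ih (j + 1), ihj] at rule
      exact rule.right_unique (h'.rule i j)

lemma eq_of_boundary_eq (h : IsGrowth X G) (h' : IsGrowth X' G')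
    (hr : ∀ i, G i N = G' i N) (ht : ∀ j, G N j = G' N j) (hi : i ≤ N)
    (hj : j ≤ N) : G i j = G' i j := by
  induction hi using Nat.decreasingInduction generalizing j with
  | self => exact ht j
  | of_succ i _ ih =>
    induction hj using Nat.decreasingInduction with
    | self => exact hr i
    | of_succ j hj ihj =>
      have rule := h.rule i j
      rw [ih hj.le, ih hj, ihj] at rule
      exact (rule.left_unique (h'.rule i j)).1

lemma mark_iff_of_boundary_eq (h : IsGrowth X G) (h' : IsGrowth X' G')
    (hr : ∀ i, G i N = G' i N) (ht : ∀ j, G N j = G' N j) (hi : i < N)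
    (hj : j < N) : X i j ↔ X' i j := by
  have eq : ∀ {i j}, i ≤ N → j ≤ N → G i j = G' i j := h.eq_of_boundary_eq h' hr ht
  have rule := h.rule i j
  rw [eq hi.le hj.le, eq hi hj.le, eq hi.le hj, eq hi hj] at rule
  exact (rule.left_unique (h'.rule i j)).2

lemma mark_right_unique (h : IsGrowth X G) {i j j' : ℕ} (hj : X i j) (hj' : X i j') : j = j' := by
  have not_lt : ∀ {j j'}, X i j → X i j' → ¬j' < j := fun hj hj' hlt =>
    (h.hstep_eq_iff i _).mp ((h.rule i _).eq_of_mark hj).1 _ hlt hj'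
  exact le_antisymm (le_of_not_gt (not_lt hj hj')) (le_of_not_gt (not_lt hj' hj))

lemma mark_left_unique (h : IsGrowth X G) {i i' j : ℕ} (hi : X i j) (hi' : X i' j) : i = i' :=
  h.transpose.mark_right_unique hi hi'

variable [IsModularLattice L]

lemma vstep_wcovBy (h : IsGrowth X G) (i j : ℕ) : G i j ⩿ G i (j + 1) := by
  cases i with
  | zero => simp [h.bot]
  | succ i => exact (h.rule i j).left_wcovBy

lemma exists_of_partial_perm (hX : ∀ i j j', X i j → X i j' → j = j')
    (hX' : ∀ i i' j, X i j → X i' j → i = i') : ∃ G : ℕ → ℕ → L, IsGrowth X G := by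
  obtain ⟨G, hbot, hleft, hG⟩ := exists_grid
    (fun i j a b => a ⩿ b ∧ (a = b ↔ ∀ j' < j, ¬X i j'))
    (fun i j a c => a ⩿ c ∧ (a = c ↔ ∀ i' < i, ¬X i' j))
    (fun i j => LocalRule (X i j)) (fun _ => (⊥ : L)) (fun _ => ⊥) rfl
    (fun j => ⟨.refl _, by simp⟩) (fun i => ⟨.refl _, by simp⟩) (by
      rintro i j a b c ⟨hab, hab'⟩ ⟨hac, hac'⟩
      obtain ⟨d, hd⟩ := LocalRule.exists_right (x := X i j) hab hac fun hx =>
        ⟨hab'.mpr fun j' hj' hx' => hj'.ne (hX _ _ _ hx' hx),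
          hac'.mpr fun i' hi' hx' => hi'.ne (hX' _ _ _ hx' hx)⟩
      refine ⟨d, hd, ⟨hd.left_wcovBy, ?_⟩, ⟨hd.right_wcovBy, ?_⟩⟩
      · rw [hd.eq_iff_left, hac', Nat.forall_lt_succ_right]
      · rw [hd.eq_iff_right, hab', Nat.forall_lt_succ_right])
  exact ⟨G, hbot, hleft, hG⟩

end IsGrowth

end IsGrowth

section RobinsonSchensted

/-- The permutation matrix of `σ`, as a set of marked cells of the quadrant. -/
def permMark {N : ℕ} (σ : Equiv.Perm (Fin N)) (i j : ℕ) : Prop :=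
  ∃ a : Fin N, (a : ℕ) = i ∧ (σ a : ℕ) = j

lemma permMark_symm {N : ℕ} (σ : Equiv.Perm (Fin N)) (i j : ℕ) :
    permMark σ.symm j i ↔ permMark σ i j := by
  constructor
  · rintro ⟨a, rfl, rfl⟩
    exact ⟨σ.symm a, rfl, by simp⟩
  · rintro ⟨a, rfl, rfl⟩
    exact ⟨σ a, rfl, by simp⟩

variable [DifferentialLattice L] [OrderBot L] [IsModularLattice L]

lemma exists_isGrowth_permMark (L : Type*) [Lattice L] [DifferentialLattice L] [OrderBot L]
    [IsModularLattice L] {N : ℕ} (σ : Equiv.Perm (Fin N)) :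
    ∃ G : ℕ → ℕ → L, IsGrowth (permMark σ) G := by
  refine IsGrowth.exists_of_partial_perm ?_ ?_
  · rintro _ _ _ ⟨a, rfl, rfl⟩ ⟨b, hba, rfl⟩
    rw [Fin.ext hba]
  · rintro _ _ _ ⟨a, rfl, rfl⟩ ⟨b, rfl, hba⟩
    rw [σ.injective (Fin.ext hba)]

/-- The growth diagram of a permutation. -/
noncomputable def growth (L : Type*) [Lattice L] [DifferentialLattice L] [OrderBot L]
    [IsModularLattice L] {N : ℕ} (σ : Equiv.Perm (Fin N)) : ℕ → ℕ → L :=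
  (exists_isGrowth_permMark L σ).choose

lemma isGrowth_growth {N : ℕ} (σ : Equiv.Perm (Fin N)) : IsGrowth (permMark σ) (growth L σ) :=
  (exists_isGrowth_permMark L σ).choose_spec

lemma growth_symm {N : ℕ} (σ : Equiv.Perm (Fin N)) (i j : ℕ) :
    growth L σ.symm i j = growth L σ j i := by
  have marks : (fun i j => permMark σ j i) = permMark σ.symm := by
    ext i j
    rw [permMark_symm]
  have transpose := (isGrowth_growth (L := L) σ).transpose
  rw [marks] at transpose
  exact congr_fun₂ ((isGrowth_growth _).unique transpose) i j

/-- The insertion tableau of `σ`, read off the last row of its growth diagram. -/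
noncomputable def insertionChain (L : Type*) [Lattice L] [DifferentialLattice L] [OrderBot L]
    [IsModularLattice L] {N : ℕ} (σ : Equiv.Perm (Fin N)) : SaturatedChain L N where
  toFun := growth L σ N
  zero := (isGrowth_growth σ).left N
  covBy t ht := by
    refine ((isGrowth_growth σ).vstep_wcovBy N t).covBy_of_ne fun h => ?_
    exact ((isGrowth_growth σ).vstep_eq_iff N t).mp h (σ.symm ⟨t, ht⟩) (Fin.isLt _)
      ⟨_, rfl, by simp⟩
  const t ht := by
    induction t, ht using Nat.le_induction with
    | base => rfl
    | succ t ht ih =>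
      refine .trans (.symm <| ((isGrowth_growth σ).vstep_eq_iff N t).mpr ?_) ih
      rintro i - ⟨a, -, rfl⟩
      exact ht.not_gt (Fin.isLt _)

lemma SaturatedChain.exists_reverse_growth {N : ℕ} (P Q : SaturatedChain L N)
    (h : P.last = Q.last) :
    ∃ K : ℕ → ℕ → L, (∀ j, K 0 j = P.toFun (N - j)) ∧ (∀ i, K i 0 = Q.toFun (N - i)) ∧
      ∀ i j, ∃ x, LocalRule x (K (i + 1) (j + 1)) (K i (j + 1)) (K (i + 1) j) (K i j) := by
  have reverse_wcovBy : ∀ (P : SaturatedChain L N) j, P.toFun (N - (j + 1)) ⩿ P.toFun (N - j) := by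
    intro P j
    rcases lt_or_ge j N with hj | hj
    · simpa only [show N - (j + 1) + 1 = N - j by omega] using P.wcovBy (N - (j + 1))
    · simp [Nat.sub_eq_zero_of_le hj, Nat.sub_eq_zero_of_le (hj.trans j.le_succ)]
  refine exists_grid (fun _ _ d c => c ⩿ d) (fun _ _ d b => b ⩿ d)
    (fun _ _ d c b a => ∃ x, LocalRule x a b c d) _ _ h (reverse_wcovBy P) (reverse_wcovBy Q) ?_
  intro _ _ d c b hcd hbd
  obtain ⟨a, x, h, hab, hac⟩ := LocalRule.exists_left hbd hcd
  exact ⟨a, ⟨x, h⟩, hac, hab⟩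

lemma SaturatedChain.exists_isGrowth {N : ℕ} (P Q : SaturatedChain L N) (h : P.last = Q.last) :
    ∃ (X : ℕ → ℕ → Prop) (G : ℕ → ℕ → L), IsGrowth X G ∧ (∀ i j, X i j → i < N ∧ j < N) ∧
      G N = P.toFun ∧ (G · N) = Q.toFun := by
  obtain ⟨K, K_zero_left, K_zero_right, hK⟩ := P.exists_reverse_growth Q h
  choose x hx using hK
  have K_left : ∀ j, K N j = ⊥ := fun j => by
    induction j with
    | zero => rw [K_zero_right, Nat.sub_self, Q.zero]
    | succ j ih => exact le_bot_iff.mp ((hx N j).left_wcovBy.le.trans_eq ih)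
  have K_right : ∀ i, K i N = ⊥ := fun i => by
    induction i with
    | zero => rw [K_zero_left, Nat.sub_self, P.zero]
    | succ i ih => exact le_bot_iff.mp ((hx i N).right_wcovBy.le.trans_eq ih)
  have K_row : ∀ i, N ≤ i → ∀ j, K (N - i) (N - j) = P.toFun j := fun i hi j => by
    rw [Nat.sub_eq_zero_of_le hi, K_zero_left, P.toFun_sub_sub]
  have K_col : ∀ j, N ≤ j → ∀ i, K (N - i) (N - j) = Q.toFun i := fun j hj i => by
    rw [Nat.sub_eq_zero_of_le hj, K_zero_right, Q.toFun_sub_sub]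
  refine ⟨fun i j => i < N ∧ j < N ∧ x (N - (i + 1)) (N - (j + 1)), fun i j => K (N - i) (N - j),
    ⟨fun j => K_left _, fun i => K_right _, fun i j => ?_⟩, fun i j h => ⟨h.1, h.2.1⟩,
    funext (K_row N le_rfl), funext (K_col N le_rfl)⟩
  rcases le_or_gt N i with hi | hi
  · simp only [K_row i hi, K_row (i + 1) (hi.trans i.le_succ)]
    exact .of_not_mark (fun h => h.1.not_ge hi) (P.wcovBy j)
  rcases le_or_gt N j with hj | hj
  · simp only [K_col j hj, K_col (j + 1) (hj.trans j.le_succ)]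
    exact (LocalRule.of_not_mark (fun h => h.2.1.not_ge hj) (Q.wcovBy i)).symm
  · simpa only [hi, hj, true_and, show N - (i + 1) + 1 = N - i by omega,
      show N - (j + 1) + 1 = N - j by omega] using hx (N - (i + 1)) (N - (j + 1))

lemma SaturatedChain.exists_perm {N : ℕ} (P Q : SaturatedChain L N) (h : P.last = Q.last) :
    ∃ σ : Equiv.Perm (Fin N), growth L σ N = P.toFun ∧ (growth L σ · N) = Q.toFun := by
  obtain ⟨X, G, hG, hX, hP, hQ⟩ := P.exists_isGrowth Q h
  have exists_mark : ∀ i : Fin N, ∃ j : Fin N, X i j := fun i => by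
    have ne : G i N ≠ G (i + 1) N := by
      simpa only [← hQ] using (Q.covBy i i.isLt).ne
    rw [Ne, hG.hstep_eq_iff] at ne
    push Not at ne
    obtain ⟨j, hj, hij⟩ := ne
    exact ⟨⟨j, hj⟩, hij⟩
  choose f hf using exists_mark
  have f_injective : Function.Injective f := fun i i' h =>
    Fin.ext (hG.mark_left_unique (hf i) (h ▸ hf i'))
  have permMark_eq : permMark (Equiv.ofBijective f f_injective.bijective_of_finite) = X := by
    ext i j
    constructor
    · rintro ⟨a, rfl, rfl⟩
      exact hf a
    · intro h
      exact ⟨⟨i, (hX i j h).1⟩, rfl, hG.mark_right_unique (hf _) h⟩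
  subst permMark_eq
  exact ⟨_, ((isGrowth_growth _).unique hG ▸ hP), ((isGrowth_growth _).unique hG ▸ hQ)⟩

theorem robinsonSchensted_bijective (L : Type*) [Lattice L] [DifferentialLattice L] [OrderBot L]
    [IsModularLattice L] (N : ℕ) :
    Function.Bijective fun σ : Equiv.Perm (Fin N) =>
      (⟨(insertionChain L σ, insertionChain L σ.symm), (growth_symm σ N N).symm⟩ :
        {PQ : SaturatedChain L N × SaturatedChain L N // PQ.1.last = PQ.2.last}) := by
  constructor
  · intro σ τ h
    obtain ⟨hP, hQ⟩ := Prod.ext_iff.mp (congrArg Subtype.val h)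
    have marks : ∀ i : Fin N, permMark σ i (σ i) ↔ permMark τ i (σ i) := fun i =>
      (isGrowth_growth (L := L) σ).mark_iff_of_boundary_eq (isGrowth_growth τ)
        (fun t => (growth_symm σ N t).symm.trans <|
          (congr_fun (congrArg SaturatedChain.toFun hQ) t).trans (growth_symm τ N t))
        (congr_fun (congrArg SaturatedChain.toFun hP)) i.isLt (σ i).isLt
    ext i
    obtain ⟨a, ha, haσ⟩ := (marks i).mp ⟨i, rfl, rfl⟩
    rw [← haσ, Fin.ext ha]
  · rintro ⟨⟨P, Q⟩, h⟩
    obtain ⟨σ, hP, hQ⟩ := P.exists_perm Q h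
    refine ⟨σ, Subtype.ext (Prod.ext (SaturatedChain.ext hP) (SaturatedChain.ext ?_))⟩
    exact (funext fun t => growth_symm σ N t).trans hQ

end RobinsonSchensted

end Growth

/-! ### Young's lattice -/

section YoungLattice

variable {μ ν : YoungDiagram}

lemma exists_youngDiagram_rowLen_eq {f : ℕ → ℕ} (hf : Antitone f) {m : ℕ} (hm : f m = 0) :
    ∃ μ : YoungDiagram, μ.rowLen = f := by
  refine ⟨⟨((Finset.range m) ×ˢ (Finset.range (f 0))).filter fun c => c.2 < f c.1, ?_⟩, ?_⟩
  · rintro ⟨i, j⟩ ⟨i', j'⟩ h hij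
    obtain ⟨hi, hj⟩ := Prod.mk_le_mk.mp h
    have := hf hi
    grind
  · ext i
    refine eq_of_forall_lt_iff fun j => YoungDiagram.mem_iff_lt_rowLen.symm.trans ?_
    change (i, j) ∈ Finset.filter _ _ ↔ _
    have le_zero : f i ≤ f 0 := hf i.zero_le
    have eq_zero : m ≤ i → f i ≤ 0 := fun h => (hf h).trans_eq hm
    grind

/-- The row lengths as an order embedding of Young's lattice. -/
def rowLenEmbedding : YoungDiagram ↪o (ℕ → ℕ) :=
  OrderEmbedding.ofMapLEIff YoungDiagram.rowLen fun μ ν => by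
    refine ⟨fun h => ?_, fun h i => le_of_forall_lt fun j => ?_⟩
    · rintro ⟨i, j⟩ hij
      exact YoungDiagram.mem_iff_lt_rowLen.mpr
        ((YoungDiagram.mem_iff_lt_rowLen.mp hij).trans_le (h i))
    · simp only [← YoungDiagram.mem_iff_lt_rowLen]
      exact fun hij => h hij

lemma rowLen_injective : Function.Injective YoungDiagram.rowLen := rowLenEmbedding.injective

lemma rowLen_le_iff : μ.rowLen ≤ ν.rowLen ↔ μ ≤ ν := rowLenEmbedding.le_iff_le

lemma antitone_rowLen (μ : YoungDiagram) : Antitone μ.rowLen := fun _ _ h => μ.rowLen_anti _ _ h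

lemma rowLen_colLen_zero (μ : YoungDiagram) : μ.rowLen (μ.colLen 0) = 0 := by
  by_contra h
  have := YoungDiagram.mem_iff_lt_rowLen.mpr (Nat.pos_of_ne_zero h)
  exact lt_irrefl _ (YoungDiagram.mem_iff_lt_colLen.mp this)

lemma exists_rowLen_eq_add_single {i : ℕ} (hi : ∀ i' < i, μ.rowLen i < μ.rowLen i') :
    ∃ ν : YoungDiagram, ν.rowLen = μ.rowLen + Pi.single i 1 := by
  refine exists_youngDiagram_rowLen_eq (m := max (μ.colLen 0) (i + 1)) ?_ ?_
  · intro k l hkl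
    have := antitone_rowLen μ hkl
    simp only [Pi.add_apply]
    grind
  · have : μ.rowLen (max (μ.colLen 0) (i + 1)) ≤ 0 :=
      (antitone_rowLen μ (le_max_left _ _)).trans_eq (rowLen_colLen_zero μ)
    simp only [Pi.add_apply]
    grind

lemma exists_rowLen_add_single_eq {i : ℕ} (hi : μ.rowLen (i + 1) < μ.rowLen i) :
    ∃ κ : YoungDiagram, κ.rowLen + Pi.single i 1 = μ.rowLen := by
  have single_le : Pi.single i 1 ≤ μ.rowLen := fun k => by grind
  obtain ⟨κ, hκ⟩ := exists_youngDiagram_rowLen_eq (f := μ.rowLen - Pi.single i 1)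
    (m := μ.colLen 0) (fun k l hkl => by
      have := antitone_rowLen μ hkl
      have : i + 1 ≤ l → μ.rowLen l ≤ μ.rowLen (i + 1) := fun h => antitone_rowLen μ h
      simp only [Pi.sub_apply]
      grind) (by simp [rowLen_colLen_zero])
  exact ⟨κ, hκ ▸ tsub_add_cancel_of_le single_le⟩

lemma covBy_of_rowLen_eq {i : ℕ} (h : ν.rowLen = μ.rowLen + Pi.single i 1) : μ ⋖ ν := by
  refine .of_image rowLenEmbedding (Pi.covBy_iff.mpr ⟨i, ?_, fun k hk => ?_⟩)
  · change μ.rowLen i ⋖ ν.rowLen i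
    simp [h]
  · change μ.rowLen k = ν.rowLen k
    simp [h, hk]

lemma covBy_iff_rowLen : μ ⋖ ν ↔ ∃ i, ν.rowLen = μ.rowLen + Pi.single i 1 := by
  refine ⟨fun h => ?_, fun ⟨i, hi⟩ => covBy_of_rowLen_eq hi⟩
  have hle : μ.rowLen ≤ ν.rowLen := rowLen_le_iff.mpr h.le
  have exists_ne : ∃ i, μ.rowLen i ≠ ν.rowLen i :=
    Function.ne_iff.mp (rowLen_injective.ne h.ne)
  classical
  let i := Nat.find exists_ne
  have hlt : μ.rowLen i < ν.rowLen i := (hle i).lt_of_ne (Nat.find_spec exists_ne)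
  obtain ⟨κ, hκ⟩ := exists_rowLen_eq_add_single (μ := μ) (i := i) fun i' hi' => by
    have := not_not.mp (Nat.find_min exists_ne hi')
    exact this ▸ hlt.trans_le (antitone_rowLen ν hi'.le)
  have κ_le : κ ≤ ν := rowLen_le_iff.mp fun k => by
    have := hle k
    rw [hκ, Pi.add_apply]
    grind
  have κ_eq : κ = ν := (h.eq_or_eq (covBy_of_rowLen_eq hκ).le κ_le).resolve_left
    (covBy_of_rowLen_eq hκ).ne'
  exact ⟨i, κ_eq ▸ hκ⟩

lemma covBy_iff_colLen : μ ⋖ ν ↔ ∃ j, ν.colLen = μ.colLen + Pi.single j 1 := by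
  rw [← apply_covBy_apply_iff YoungDiagram.transposeOrderIso, covBy_iff_rowLen]
  simp [funext_iff]

lemma rowLen_add_single_injective (μ : YoungDiagram) :
    Function.Injective fun i => μ.rowLen + Pi.single i 1 := by
  intro i k h
  have := congr_fun (add_left_cancel h) i
  grind

/-- The corners of a Young diagram, represented by their rows. -/
abbrev Corner (μ : YoungDiagram) := {i // μ.rowLen (i + 1) < μ.rowLen i}

instance (μ : YoungDiagram) : Finite (Corner μ) := by
  refine Finite.of_injective (β := Fin (μ.colLen 0)) (fun i => ⟨i, ?_⟩) fun i k h => ?_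
  · exact YoungDiagram.mem_iff_lt_colLen.mp (YoungDiagram.mem_iff_lt_rowLen.mpr (pos_of_gt i.2))
  · exact Subtype.ext (Fin.mk.inj h)

lemma nonempty_corner_equiv (μ : YoungDiagram) : Nonempty (Corner μ ≃ {κ // κ ⋖ μ}) := by
  choose f hf using fun i : Corner μ => exists_rowLen_add_single_eq i.2
  refine ⟨.ofBijective (fun i => ⟨f i, covBy_of_rowLen_eq (hf i).symm⟩) ⟨fun i k h => ?_, ?_⟩⟩
  · have f_eq : f i = f k := congrArg Subtype.val h
    refine Subtype.ext (rowLen_add_single_injective (f i) ((hf i).trans ?_))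
    exact (hf k).symm.trans (f_eq ▸ rfl)
  · rintro ⟨κ, hκ⟩
    obtain ⟨i, hi⟩ := covBy_iff_rowLen.mp hκ
    have corner : μ.rowLen (i + 1) < μ.rowLen i := by
      have := antitone_rowLen κ i.le_succ
      simp only [hi, Pi.add_apply]
      grind
    exact ⟨⟨i, corner⟩,
      Subtype.ext (rowLen_injective (add_right_cancel ((hf ⟨i, corner⟩).trans hi)))⟩

/-- The row that receives the new cell when the diagram `μ` is enlarged: row `0`, or the row below
a corner. -/
def growingRow {μ : YoungDiagram} : Option (Corner μ) → ℕ
  | none => 0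
  | some i => i + 1

lemma growingRow_injective : Function.Injective (growingRow (μ := μ)) := by
  rintro (_ | i) (_ | k) h
  · rfl
  · exact absurd h.symm (Nat.succ_ne_zero _)
  · exact absurd h (Nat.succ_ne_zero _)
  · exact congrArg some (Subtype.ext (Nat.succ_injective h))

lemma rowLen_lt_of_lt_growingRow (k : Option (Corner μ)) :
    ∀ i < growingRow k, μ.rowLen (growingRow k) < μ.rowLen i := by
  intro i hi
  cases k with
  | none => exact (Nat.not_lt_zero _ hi).elim
  | some k => exact k.2.trans_le (antitone_rowLen μ (Nat.le_of_lt_succ hi))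

lemma exists_growingRow_eq {i : ℕ} (h : ν.rowLen = μ.rowLen + Pi.single i 1) :
    ∃ k : Option (Corner μ), growingRow k = i := by
  rcases i with _ | i
  · exact ⟨none, rfl⟩
  · have := antitone_rowLen ν i.le_succ
    refine ⟨some ⟨i, ?_⟩, rfl⟩
    simp only [h, Pi.add_apply] at this
    grind

lemma exists_option_corner_equiv (μ : YoungDiagram) :
    ∃ e : Option (Corner μ) ≃ {ν // μ ⋖ ν},
      ∀ k, (e k : YoungDiagram).rowLen = μ.rowLen + Pi.single (growingRow k) 1 := by
  choose f hf using fun k : Option (Corner μ) =>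
    exists_rowLen_eq_add_single (rowLen_lt_of_lt_growingRow k)
  refine ⟨.ofBijective (fun k => ⟨f k, covBy_of_rowLen_eq (hf k)⟩) ⟨fun k l h => ?_, ?_⟩, hf⟩
  · have f_eq : f k = f l := congrArg Subtype.val h
    refine growingRow_injective (rowLen_add_single_injective μ ((hf k).symm.trans ?_))
    rw [f_eq, hf l]
  · rintro ⟨ν, hν⟩
    obtain ⟨i, hi⟩ := covBy_iff_rowLen.mp hν
    obtain ⟨k, rfl⟩ := exists_growingRow_eq hi
    exact ⟨k, Subtype.ext (rowLen_injective ((hf k).trans hi.symm))⟩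

/-- The bijection from the ways of adding a cell to `μ` to the upper covers of `μ`. -/
noncomputable def addCell (μ : YoungDiagram) : Option (Corner μ) ≃ {ν // μ ⋖ ν} :=
  (exists_option_corner_equiv μ).choose

lemma rowLen_addCell (k : Option (Corner μ)) :
    (addCell μ k : YoungDiagram).rowLen = μ.rowLen + Pi.single (growingRow k) 1 :=
  (exists_option_corner_equiv μ).choose_spec k

noncomputable instance : DifferentialLattice YoungDiagram where
  coverEquiv μ := (nonempty_corner_equiv μ).some.symm.optionCongr.trans (addCell μ)

noncomputable instance (μ : YoungDiagram) : Fintype {ν // μ ⋖ ν} :=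
  have := Finite.of_equiv _ (addCell μ)
  .ofFinite _

open DifferentialLattice

lemma rowLen_zero_coverEquiv_some (κ : {κ // κ ⋖ μ}) :
    (coverEquiv μ (some κ) : YoungDiagram).rowLen 0 = μ.rowLen 0 := by
  change (addCell μ (some _) : YoungDiagram).rowLen 0 = _
  simp [rowLen_addCell, growingRow]

lemma rowLen_zero_coverEquiv_none :
    (coverEquiv μ none : YoungDiagram).rowLen 0 = μ.rowLen 0 + 1 := by
  change (addCell μ none : YoungDiagram).rowLen 0 = _
  simp [rowLen_addCell, growingRow]

lemma rowLen_sup (i : ℕ) : (μ ⊔ ν).rowLen i = max (μ.rowLen i) (ν.rowLen i) :=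
  eq_of_forall_lt_iff fun j => by
    simp only [← YoungDiagram.mem_iff_lt_rowLen, YoungDiagram.mem_sup, lt_max_iff]

section LocalRule

variable {x : Prop} {a b c d : YoungDiagram}

lemma LocalRule.rowLen_zero_of_mark (h : LocalRule x a b c d) (hx : x) :
    d.rowLen 0 = a.rowLen 0 + 1 := by
  cases h with
  | mark _ _ _ hd => rw [hd, rowLen_zero_coverEquiv_none]
  | _ hx' => exact (hx' hx).elim

lemma LocalRule.rowLen_zero_of_not_mark (h : LocalRule x a b c d) (hx : ¬x) :
    d.rowLen 0 = max (b.rowLen 0) (c.rowLen 0) := by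
  rcases h with ⟨-, -, -, rfl, -, -⟩ | ⟨-, rfl, rfl, rfl⟩ | ⟨-, hab, rfl, rfl⟩ | ⟨hx', -, -, -⟩
  · exact rowLen_sup 0
  · rw [max_self]
  · rw [max_self, rowLen_zero_coverEquiv_some]
  · exact (hx hx').elim

end LocalRule

lemma card_eq_of_covBy (h : μ ⋖ ν) : ν.card = μ.card + 1 := by
  obtain ⟨i, hi⟩ := covBy_iff_rowLen.mp h
  have notMem : (i, μ.rowLen i) ∉ μ.cells := by
    simp [YoungDiagram.mem_iff_lt_rowLen]
  have cells_eq : ν.cells = insert (i, μ.rowLen i) μ.cells := by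
    ext ⟨a, b⟩
    rw [Finset.mem_insert, YoungDiagram.mem_cells, YoungDiagram.mem_cells,
      YoungDiagram.mem_iff_lt_rowLen, YoungDiagram.mem_iff_lt_rowLen, hi, Pi.add_apply]
    grind
  rw [YoungDiagram.card, cells_eq, Finset.card_insert_of_notMem notMem]

lemma card_last {N : ℕ} (P : SaturatedChain YoungDiagram N) : P.last.card = N := by
  induction N with
  | zero => rw [P.last_zero]; rfl
  | succ N ih =>
    have last_eq := ih P.init
    rw [P.last_init] at last_eq
    exact (card_eq_of_covBy (P.covBy N N.lt_succ_self)).trans (congrArg (· + 1) last_eq)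

end YoungLattice

/-! ### Schensted's theorem -/

section Schensted

variable {N : ℕ} {σ : Equiv.Perm (Fin N)} {i j : ℕ}

/-- The increasing subsequences of `σ` that lie in the box `[0, i) × [0, j)`, given by their sets
of positions. -/
def boxIncreasing {N : ℕ} (σ : Equiv.Perm (Fin N)) (i j : ℕ) : Set (Finset (Fin N)) :=
  {s | StrictMonoOn σ s ∧ ∀ a ∈ s, (a : ℕ) < i ∧ (σ a : ℕ) < j}

lemma boxIncreasing_succ_of_not_mark (h : ¬permMark σ i j) :
    boxIncreasing σ (i + 1) (j + 1) = boxIncreasing σ (i + 1) j ∪ boxIncreasing σ i (j + 1) := by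
  ext s
  refine ⟨fun ⟨mono, box⟩ => ?_, ?_⟩
  · by_contra! hs
    obtain ⟨b, hb, hbj⟩ : ∃ b ∈ s, (σ b : ℕ) = j := by
      by_contra! hj
      exact hs (.inl ⟨mono, fun a ha => by have := box a ha; have := hj a ha; omega⟩)
    obtain ⟨a, ha, hai⟩ : ∃ a ∈ s, (a : ℕ) = i := by
      by_contra! hi
      exact hs (.inr ⟨mono, fun a ha => by have := box a ha; have := hi a ha; omega⟩)
    have b_ne : b ≠ a := fun hba => h ⟨a, hai, hba ▸ hbj⟩
    have b_lt : b < a := by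
      have := (box b hb).1
      omega
    have : (σ b : ℕ) < σ a := mono hb ha b_lt
    have := (box a ha).2
    omega
  · rintro (⟨mono, box⟩ | ⟨mono, box⟩)
    · exact ⟨mono, fun a ha => ⟨(box a ha).1, (box a ha).2.trans j.lt_succ_self⟩⟩
    · exact ⟨mono, fun a ha => ⟨(box a ha).1.trans i.lt_succ_self, (box a ha).2⟩⟩

lemma erase_mem_boxIncreasing {a : Fin N} {s : Finset (Fin N)}
    (hs : s ∈ boxIncreasing σ (a + 1) (σ a + 1)) : s.erase a ∈ boxIncreasing σ a (σ a) := by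
  refine ⟨hs.1.mono (Finset.erase_subset _ _), fun b hb => ?_⟩
  obtain ⟨b_ne, hb⟩ := Finset.mem_erase.mp hb
  have val_ne : (b : ℕ) ≠ a := Fin.val_ne_of_ne b_ne
  have image_ne : (σ b : ℕ) ≠ σ a := Fin.val_ne_of_ne (σ.injective.ne b_ne)
  have := hs.2 b hb
  omega

lemma insert_mem_boxIncreasing {a : Fin N} {s : Finset (Fin N)}
    (hs : s ∈ boxIncreasing σ a (σ a)) : insert a s ∈ boxIncreasing σ (a + 1) (σ a + 1) := by
  have lt : ∀ b ∈ s, b < a ∧ σ b < σ a := hs.2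
  refine ⟨?_, fun b hb => ?_⟩
  · rw [Finset.coe_insert]
    rintro b (rfl | hb) c (rfl | hc) hbc
    · exact (hbc.ne rfl).elim
    · exact (hbc.not_gt (lt c hc).1).elim
    · exact (lt b hb).2
    · exact hs.1 hb hc hbc
  · obtain rfl | hb := Finset.mem_insert.mp hb
    · exact ⟨Nat.lt_succ_self _, Nat.lt_succ_self _⟩
    · exact ⟨(hs.2 b hb).1.trans (Nat.lt_succ_self _), (hs.2 b hb).2.trans (Nat.lt_succ_self _)⟩

lemma isGreatest_card_boxIncreasing_mark {a : Fin N} {m : ℕ}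
    (h : IsGreatest (Finset.card '' boxIncreasing σ a (σ a)) m) :
    IsGreatest (Finset.card '' boxIncreasing σ (a + 1) (σ a + 1)) (m + 1) := by
  obtain ⟨⟨s, hs, card_s⟩, upper⟩ := h
  constructor
  · have notMem : a ∉ s := fun ha => lt_irrefl _ (hs.2 a ha).1
    refine ⟨insert a s, insert_mem_boxIncreasing hs, ?_⟩
    rw [Finset.card_insert_of_notMem notMem, card_s]
  · rintro _ ⟨t, ht, rfl⟩
    have erase_le : (t.erase a).card ≤ m := upper ⟨_, erase_mem_boxIncreasing ht, rfl⟩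
    exact Nat.le_add_of_sub_le (Finset.pred_card_le_card_erase.trans erase_le)

lemma isGreatest_card_boxIncreasing_of_forall_eq_empty
    (h : ∀ s ∈ boxIncreasing σ i j, s = ∅) :
    IsGreatest (Finset.card '' boxIncreasing σ i j) 0 := by
  refine ⟨⟨∅, ⟨by simp [StrictMonoOn], by simp⟩, rfl⟩, ?_⟩
  rintro _ ⟨s, hs, rfl⟩
  simp [h s hs]

lemma isGreatest_rowLen_growth (σ : Equiv.Perm (Fin N)) (i j : ℕ) :
    IsGreatest (Finset.card '' boxIncreasing σ i j) ((growth YoungDiagram σ i j).rowLen 0) := by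
  have isGrowth := isGrowth_growth (L := YoungDiagram) σ
  have rowLen_bot : (⊥ : YoungDiagram).rowLen 0 = 0 := by simp [YoungDiagram.rowLen]
  induction i generalizing j with
  | zero =>
    rw [isGrowth.bot, rowLen_bot]
    exact isGreatest_card_boxIncreasing_of_forall_eq_empty fun s hs =>
      Finset.eq_empty_of_forall_notMem fun a ha => Nat.not_lt_zero _ (hs.2 a ha).1
  | succ i ih =>
    induction j with
    | zero =>
      rw [isGrowth.left, rowLen_bot]
      exact isGreatest_card_boxIncreasing_of_forall_eq_empty fun s hs =>
        Finset.eq_empty_of_forall_notMem fun a ha => Nat.not_lt_zero _ (hs.2 a ha).2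
    | succ j ihj =>
      have rule := isGrowth.rule i j
      by_cases hx : permMark σ i j
      · rw [rule.rowLen_zero_of_mark hx]
        obtain ⟨a, rfl, rfl⟩ := hx
        exact isGreatest_card_boxIncreasing_mark (ih _)
      · rw [rule.rowLen_zero_of_not_mark hx, boxIncreasing_succ_of_not_mark hx, Set.image_union]
        exact ihj.union (ih _)

lemma rowLen_insertionChain_le_iff (σ : Equiv.Perm (Fin N)) (n : ℕ) :
    (insertionChain YoungDiagram σ).last.rowLen 0 ≤ n ↔
      ∀ s : Finset (Fin N), StrictMonoOn σ ↑s → s.card ≤ n := by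
  rw [show (insertionChain YoungDiagram σ).last = growth YoungDiagram σ N N from rfl,
    isLUB_le_iff (isGreatest_rowLen_growth σ N N).isLUB]
  simp [upperBounds, boxIncreasing]

end Schensted

/-! ### Pieri's rule -/

section Pieri

open YoungDiagram (mem_iff_lt_rowLen mem_iff_lt_colLen)

variable {n : ℕ} {M : Type*} [AddCommMonoid M] {μ ν : YoungDiagram}

/-- The column lengths of a Young diagram with at most `n` columns, made distinct by subtracting
the staircase `(0, 1, …, n - 1)`: the exponents of the alternant of the conjugate diagram. -/
def shiftedColLen (n : ℕ) (μ : YoungDiagram) : Fin n → ℤ := fun j => μ.colLen j - j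

lemma colLen_bot (j : ℕ) : (⊥ : YoungDiagram).colLen j = 0 := by
  by_contra h
  exact YoungDiagram.notMem_bot _ (mem_iff_lt_colLen.mpr (Nat.pos_of_ne_zero h))

lemma shiftedColLen_bot : shiftedColLen n ⊥ = fun j : Fin n => -(j : ℤ) := by
  ext j
  simp only [shiftedColLen, colLen_bot, Nat.cast_zero, zero_sub]

lemma strictAnti_shiftedColLen (n : ℕ) (μ : YoungDiagram) : StrictAnti (shiftedColLen n μ) := by
  intro i j hij
  have := μ.colLen_anti i j hij.le
  simp only [shiftedColLen]
  omega

lemma rowLen_zero_le_iff : μ.rowLen 0 ≤ n ↔ μ.colLen n = 0 := by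
  rw [← not_lt, ← mem_iff_lt_rowLen, mem_iff_lt_colLen, not_lt, Nat.le_zero]

lemma colLen_eq_zero_of_rowLen_zero_le (hμ : μ.rowLen 0 ≤ n) {j : ℕ} (hj : n ≤ j) :
    μ.colLen j = 0 :=
  Nat.le_zero.mp ((μ.colLen_anti n j hj).trans_eq (rowLen_zero_le_iff.mp hμ))

lemma colLen_injective : Function.Injective YoungDiagram.colLen := fun μ ν h =>
  YoungDiagram.transposeOrderIso.injective (rowLen_injective (by ext; simp [h]))

lemma shiftedColLen_inj (hμ : μ.rowLen 0 ≤ n) (hν : ν.rowLen 0 ≤ n) :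
    shiftedColLen n μ = shiftedColLen n ν ↔ μ = ν := by
  refine ⟨fun h => colLen_injective (funext fun j => ?_), congrArg _⟩
  obtain hj | hj := lt_or_ge j n
  · simpa only [shiftedColLen, sub_left_inj, Nat.cast_inj] using congr_fun h ⟨j, hj⟩
  · rw [colLen_eq_zero_of_rowLen_zero_le hμ hj, colLen_eq_zero_of_rowLen_zero_le hν hj]

lemma shiftedColLen_of_colLen_eq {j : Fin n} (h : ν.colLen = μ.colLen + Pi.single (j : ℕ) 1) :
    shiftedColLen n ν = shiftedColLen n μ + Pi.single j 1 := by
  ext i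
  simp only [shiftedColLen, h, Pi.add_apply, Pi.single_apply, Fin.ext_iff]
  grind

lemma exists_colLen_eq_add_single {j : ℕ} (hj : ∀ j' < j, μ.colLen j < μ.colLen j') :
    ∃ ν : YoungDiagram, ν.colLen = μ.colLen + Pi.single j 1 := by
  obtain ⟨ν, hν⟩ := exists_rowLen_eq_add_single (μ := μ.transpose) (i := j) (by simpa using hj)
  exact ⟨ν.transpose, by ext i; simpa using congr_fun hν i⟩

lemma exists_colLen_eq_add_single_of_injective {j : Fin n}
    (h : Function.Injective (shiftedColLen n μ + Pi.single j 1)) :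
    ∃ ν : YoungDiagram, ν.colLen = μ.colLen + Pi.single (j : ℕ) 1 := by
  refine exists_colLen_eq_add_single fun j' hj' => ?_
  have pred_lt : (j : ℕ) - 1 < n := by omega
  have pred_ne : (⟨j - 1, pred_lt⟩ : Fin n) ≠ j := fun heq => by
    have := congrArg Fin.val heq
    simp only at this
    omega
  have ne := h.ne pred_ne
  simp only [Pi.add_apply, Pi.single_eq_same, Pi.single_eq_of_ne pred_ne, shiftedColLen] at ne
  have := μ.colLen_anti (j - 1) j (Nat.sub_le _ _)
  have := μ.colLen_anti j' (j - 1) (Nat.le_sub_one_of_lt hj')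
  omega

/-- The value of `φ` at the shifted column lengths of a Young diagram, extended by zero to the
diagrams with more than `n` columns. -/
def onShape (φ : (Fin n → ℤ) → M) (μ : YoungDiagram) : M :=
  if μ.rowLen 0 ≤ n then φ (shiftedColLen n μ) else 0

lemma onShape_of_le (φ : (Fin n → ℤ) → M) (hμ : μ.rowLen 0 ≤ n) :
    onShape φ μ = φ (shiftedColLen n μ) := if_pos hμ

lemma rowLen_zero_le_of_onShape_ne_zero {φ : (Fin n → ℤ) → M} (h : onShape φ μ ≠ 0) :
    μ.rowLen 0 ≤ n :=
  of_not_not fun hμ => h (if_neg hμ)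

lemma rowLen_zero_le_of_colLen_eq (hμ : μ.rowLen 0 ≤ n) {j : Fin n}
    (h : ν.colLen = μ.colLen + Pi.single (j : ℕ) 1) : ν.rowLen 0 ≤ n := by
  rw [rowLen_zero_le_iff] at hμ ⊢
  simp [h, hμ, j.isLt.ne']

lemma exists_fin_colLen_eq_of_covBy (h : μ ⋖ ν) (hν : ν.rowLen 0 ≤ n) :
    ∃ j : Fin n, ν.colLen = μ.colLen + Pi.single (j : ℕ) 1 := by
  obtain ⟨j, hj⟩ := covBy_iff_colLen.mp h
  refine ⟨⟨j, lt_of_not_ge fun hnj => ?_⟩, hj⟩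
  have := colLen_eq_zero_of_rowLen_zero_le hν hnj
  simp [hj] at this

lemma sum_onShape_covBy {φ : (Fin n → ℤ) → M} (hφ : ∀ x, ¬Function.Injective x → φ x = 0)
    (μ : YoungDiagram) :
    ∑ ν : {ν // μ ⋖ ν}, onShape φ ν = onShape (fun x => ∑ j, φ (x + Pi.single j 1)) μ := by
  by_cases hμ : μ.rowLen 0 ≤ n
  · rw [onShape_of_le _ hμ]
    choose! add hadd using fun j (hj : φ (shiftedColLen n μ + Pi.single j 1) ≠ 0) =>
      exists_colLen_eq_add_single_of_injective (of_not_not (mt (hφ _) hj))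
    symm
    refine Finset.sum_bij_ne_zero
      (fun j _ hj => ⟨add j, covBy_iff_colLen.mpr ⟨j, hadd j hj⟩⟩)
      (fun _ _ _ => Finset.mem_univ _) (fun i _ hi j _ hj hij => ?_) (fun ν _ hν => ?_)
      fun j _ hj => ?_
    · have eq : add i = add j := congrArg Subtype.val hij
      have := add_left_cancel ((hadd i hi).symm.trans ((congrArg _ eq).trans (hadd j hj)))
      exact Fin.ext (by have := congr_fun this i; grind)
    · have hν' := rowLen_zero_le_of_onShape_ne_zero hν
      obtain ⟨j, hj⟩ := exists_fin_colLen_eq_of_covBy ν.2 hν'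
      rw [onShape_of_le φ hν', shiftedColLen_of_colLen_eq hj] at hν
      exact ⟨j, Finset.mem_univ _, hν,
        Subtype.ext (colLen_injective ((hadd j hν).trans hj.symm))⟩
    · rw [onShape_of_le φ (rowLen_zero_le_of_colLen_eq hμ (hadd j hj)),
        shiftedColLen_of_colLen_eq (hadd j hj)]
  · rw [onShape, if_neg hμ]
    refine Finset.sum_eq_zero fun ν _ => if_neg fun hν => hμ ?_
    exact (rowLen_le_iff.mpr ν.2.le 0).trans hν

lemma sum_saturatedChain_onShape {φ : ℕ → (Fin n → ℤ) → M}
    (φ_eq_zero : ∀ k x, ¬Function.Injective x → φ k x = 0)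
    (φ_succ : ∀ k x, φ (k + 1) x = ∑ j, φ k (x + Pi.single j 1)) (k N : ℕ) :
    ∑ P : SaturatedChain YoungDiagram N, onShape (φ k) P.last =
      φ (k + N) (shiftedColLen n ⊥) := by
  induction N generalizing k with
  | zero =>
    have bot_le : (⊥ : YoungDiagram).rowLen 0 ≤ n := rowLen_zero_le_iff.mpr (colLen_bot n)
    simp only [Fintype.sum_unique, SaturatedChain.last_zero, onShape_of_le _ bot_le, add_zero]
  | succ N ih =>
    rw [SaturatedChain.sum_last_succ, ← Nat.succ_add_eq_add_succ, ← ih]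
    simp only [sum_onShape_covBy (φ_eq_zero k), ← φ_succ]

end Pieri

/-! ### The expansion of the determinant -/

section Counting

open UnitAddTorus

/-- The pairs of standard Young tableaux of a common shape with at most `n` columns. -/
abbrev TableauPair (n l k : ℕ) :=
  {PQ : SaturatedChain YoungDiagram l × SaturatedChain YoungDiagram k //
    PQ.1.last = PQ.2.last ∧ PQ.1.last.rowLen 0 ≤ n}

lemma permCount_eq_card_tableauPair (n N : ℕ) :
    permCount n N = Nat.card (TableauPair n N N) :=
  Nat.card_congr <|
    ((Equiv.ofBijective _ (robinsonSchensted_bijective YoungDiagram N)).subtypeEquiv fun σ =>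
      (rowLen_insertionChain_le_iff σ n).symm).trans <|
    Equiv.subtypeSubtypeEquivSubtypeInter _
      fun PQ : SaturatedChain YoungDiagram N × SaturatedChain YoungDiagram N =>
        PQ.1.last.rowLen 0 ≤ n

lemma isEmpty_tableauPair {l k : ℕ} (h : l ≠ k) (n : ℕ) : IsEmpty (TableauPair n l k) :=
  ⟨fun PQ => h (by rw [← card_last PQ.1.1, PQ.2.1, card_last])⟩

lemma powerSum_pow_mul_alternant (n k : ℕ) :
    powerSum (Fin n) 1 ^ k * alternant (shiftedColLen n ⊥) =
      ∑ P : SaturatedChain YoungDiagram k, onShape alternant P.last := by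
  have := sum_saturatedChain_onShape (φ := fun k x => powerSum (Fin n) 1 ^ k * alternant x)
    (fun k x hx => by rw [alternant_of_not_injective hx, mul_zero])
    (fun k x => by rw [pow_succ, mul_assoc, powerSum_mul_alternant, Finset.mul_sum]) 0 k
  simpa only [pow_zero, one_mul, zero_add] using this.symm

lemma torusCoeff_powerSum_neg_pow_mul_alternant (n l : ℕ) (x : Fin n → ℤ) :
    torusCoeff (shiftedColLen n ⊥) (powerSum (Fin n) (-1) ^ l * alternant x) =
      ∑ Q : SaturatedChain YoungDiagram l,
        onShape (fun y => torusCoeff y (alternant x)) Q.last := by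
  have := sum_saturatedChain_onShape
    (φ := fun l y => torusCoeff y (powerSum (Fin n) (-1) ^ l * alternant x))
    (fun l y hy => torusCoeff_powerSum_pow_mul_alternant_of_not_injective hy (-1) l x)
    (fun l y => by
      rw [pow_succ', mul_assoc, torusCoeff_powerSum_mul]
      simp only [Pi.single_neg, sub_neg_eq_add]) 0 l
  simpa only [pow_zero, one_mul, zero_add] using this.symm

open Classical in
lemma onShape_torusCoeff_alternant {n : ℕ} {μ ν : YoungDiagram} (hν : ν.rowLen 0 ≤ n) :
    onShape (fun y => torusCoeff y (alternant (shiftedColLen n ν))) μ =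
      if μ = ν then (1 : ℂ) else 0 := by
  by_cases hμ : μ.rowLen 0 ≤ n
  · rw [onShape_of_le _ hμ, torusCoeff_alternant_of_strictAnti (strictAnti_shiftedColLen n μ)
      (strictAnti_shiftedColLen n ν)]
    simp only [shiftedColLen_inj hμ hν]
  · rw [onShape, if_neg hμ, if_neg fun h : μ = ν => hμ (h ▸ hν)]

open Classical in
lemma torusCoeff_powerSum_neg_pow_mul_onShape (n l : ℕ) (ν : YoungDiagram) :
    torusCoeff (shiftedColLen n ⊥) (powerSum (Fin n) (-1) ^ l * onShape alternant ν) =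
      ∑ P : SaturatedChain YoungDiagram l,
        if P.last = ν ∧ P.last.rowLen 0 ≤ n then (1 : ℂ) else 0 := by
  by_cases hν : ν.rowLen 0 ≤ n
  · rw [onShape_of_le _ hν, torusCoeff_powerSum_neg_pow_mul_alternant]
    refine Finset.sum_congr rfl fun P _ => ?_
    rw [onShape_torusCoeff_alternant hν]
    exact if_congr ⟨fun h => ⟨h, h ▸ hν⟩, And.left⟩ rfl rfl
  · rw [onShape, if_neg hν, mul_zero, map_zero]
    exact (Finset.sum_eq_zero fun P _ => if_neg fun ⟨h, hP⟩ => hν (h ▸ hP)).symm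

lemma torusCoeff_powerSum_pow_mul_powerSum_pow (n l k : ℕ) :
    torusCoeff (shiftedColLen n ⊥)
        (powerSum (Fin n) (-1) ^ l * powerSum (Fin n) 1 ^ k * alternant (shiftedColLen n ⊥)) =
      Nat.card (TableauPair n l k) := by
  classical
  rw [mul_assoc, powerSum_pow_mul_alternant, Finset.mul_sum, map_sum, Nat.card_eq_fintype_card,
    Fintype.card_subtype, ← Finset.sum_boole, Fintype.sum_prod_type_right]
  simp only [torusCoeff_powerSum_neg_pow_mul_onShape]

end Counting

section Symbol

open NormedSpace UnitAddTorus

/-- The symbol `exp (s (z + z⁻¹))`, as a continuous function on the circle. -/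
noncomputable def gesselSymbol (s : ℂ) : C(UnitAddCircle, ℂ) := exp (s • (fourier 1 + fourier (-1)))

lemma gesselSymbol_coe (s : ℂ) (x : ℝ) :
    gesselSymbol s x = Complex.exp (s * (Complex.exp ((2 * π * x : ℝ) * Complex.I) +
      Complex.exp (-(2 * π * x : ℝ) * Complex.I))) := by
  rw [Complex.exp_eq_exp_ℂ]
  refine (map_exp (ContinuousMap.evalAlgHom ℂ ℂ (x : UnitAddCircle))
    (continuous_eval_const _) _).trans ?_
  simp only [ContinuousMap.evalAlgHom_apply, ContinuousMap.smul_apply, ContinuousMap.add_apply,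
    fourier_coe_apply, smul_eq_mul, ← Complex.exp_eq_exp_ℂ]
  push_cast
  ring_nf

lemma gesselCoeff_eq_fourierCoeff (lam : ℝ) (j : ℤ) :
    gesselCoeff lam j = fourierCoeff (gesselSymbol (Real.sqrt lam)) j := by
  have two_pi_ne : 2 * π ≠ 0 := Real.two_pi_pos.ne'
  rw [gesselCoeff, fourierCoeff_eq_intervalIntegral _ _ 0, zero_add, div_one, one_smul]
  have scale := intervalIntegral.integral_comp_mul_left (a := 0) (b := 1)
    (fun θ : ℝ => Complex.exp ((Real.sqrt lam : ℂ) *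
      (Complex.exp (θ * Complex.I) + Complex.exp (-θ * Complex.I))) *
        Complex.exp (-(j * θ) * Complex.I)) two_pi_ne
  rw [mul_zero, mul_one] at scale
  have one_div_two_pi : 1 / (2 * (π : ℂ)) = ((2 * π)⁻¹ : ℝ) := by push_cast; rw [one_div]
  rw [one_div_two_pi, ← Complex.real_smul, ← scale]
  refine intervalIntegral.integral_congr fun x _ => ?_
  simp only [gesselSymbol_coe, fourier_coe_apply, smul_eq_mul]
  rw [mul_comm]
  push_cast
  ring_nf

lemma mFourier_single_eq_comp {d : Type*} [Fintype d] [DecidableEq d] (i : d) (m : ℤ) :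
    mFourier (Pi.single i m) = (fourier m).comp (torusCoord i) := by
  rw [mFourier_eq_prod, Fintype.prod_eq_single i fun j hj => ?_, Pi.single_eq_same]
  ext t
  rw [Pi.single_eq_of_ne hj, ContinuousMap.comp_apply, fourier_zero, ContinuousMap.one_apply]

lemma gesselSymbol_comp {d : Type*} [Fintype d] [DecidableEq d] (s : ℂ) (i : d) :
    (gesselSymbol s).comp (torusCoord i) =
      exp (s • (mFourier (Pi.single i 1) + mFourier (Pi.single i (-1)))) := by
  let pullback : C(UnitAddCircle, ℂ) →ₐ[ℂ] C(UnitAddTorus d, ℂ) :=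
    ContinuousMap.compRightAlgHom ℂ ℂ (torusCoord i)
  rw [mFourier_single_eq_comp, mFourier_single_eq_comp]
  exact map_exp pullback (ContinuousMap.compRightAlgHom_continuous ℂ ℂ _) _

lemma prod_gesselSymbol_comp {d : Type*} [Fintype d] [DecidableEq d] (s : ℂ) :
    ∏ i : d, (gesselSymbol s).comp (torusCoord i) =
      exp (s • powerSum d (-1)) * exp (s • powerSum d 1) := by
  simp only [gesselSymbol_comp, powerSum]
  rw [← NormedSpace.exp_sum, ← NormedSpace.exp_add, ← Finset.smul_sum, Finset.sum_add_distrib,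
    add_comm, smul_add]

end Symbol

section Expansion

open NormedSpace Matrix

lemma hasSum_exp_mul_exp {𝕜 A : Type*} [RCLike 𝕜] [NormedRing A] [NormedAlgebra 𝕜 A]
    [CompleteSpace A] (x y : A) :
    HasSum (fun p : ℕ × ℕ => ((p.1.factorial : 𝕜)⁻¹ * (p.2.factorial : 𝕜)⁻¹) • (x ^ p.1 * y ^ p.2))
      (exp x * exp y) := by
  have summable := summable_mul_of_summable_norm (norm_expSeries_summable' (𝕂 := 𝕜) x)
    (norm_expSeries_summable' (𝕂 := 𝕜) y)
  simpa only [smul_mul_smul_comm] using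
    (exp_series_hasSum_exp' (𝕂 := 𝕜) x).mul (exp_series_hasSum_exp' (𝕂 := 𝕜) y) summable

lemma hasSum_det_toeplitz_gesselSymbol (s : ℂ) (n : ℕ) :
    HasSum (fun p : ℕ × ℕ => ((p.1.factorial : ℂ)⁻¹ * (p.2.factorial : ℂ)⁻¹) *
        (s ^ p.1 * s ^ p.2 * Nat.card (TableauPair n p.1 p.2)))
      (det (of fun j k : Fin n => fourierCoeff (gesselSymbol s) ((j : ℤ) - (k : ℤ)))) := by
  have series := hasSum_exp_mul_exp (𝕜 := ℂ) (s • powerSum (Fin n) (-1)) (s • powerSum (Fin n) 1)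
  simp only [smul_pow, smul_mul_smul_comm] at series
  have series_coeff := (series.mul_right (alternant (shiftedColLen n ⊥))).mapL
    (torusCoeff (shiftedColLen n ⊥))
  rw [det_toeplitz_fourierCoeff _ fun j : Fin n => (j : ℤ), prod_gesselSymbol_comp,
    ← shiftedColLen_bot]
  simpa only [smul_mul_assoc, map_smul, torusCoeff_powerSum_pow_mul_powerSum_pow, smul_eq_mul]
    using series_coeff

end Expansion

/-- Gessel's formula: `Δ_{n,λ} = ∑_{N≥0} u_n(N) λ^N / (N!)²`. -/
theorem gessel_generating_function (lam : ℝ) (hlam : 0 < lam) (n : ℕ) :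
    gesselDet lam n =
      ∑' N : ℕ, (permCount n N : ℂ) * (lam : ℂ)^N / ((N.factorial : ℂ))^2 := by
  have series := hasSum_det_toeplitz_gesselSymbol (Real.sqrt lam) n
  have diagonal : Function.Injective fun N : ℕ => (N, N) := fun _ _ h => (Prod.mk.inj h).1
  rw [← diagonal.hasSum_iff] at series
  · simp only [gesselDet, gesselCoeff_eq_fourierCoeff, ← series.tsum_eq]
    refine tsum_congr fun N => ?_
    have sqrt_mul_sqrt : (Real.sqrt lam : ℂ) * Real.sqrt lam = lam := by
      rw [← Complex.ofReal_mul, Real.mul_self_sqrt hlam.le]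
    rw [Function.comp_apply, ← permCount_eq_card_tableauPair, ← mul_pow, sqrt_mul_sqrt]
    ring
  · rintro ⟨l, k⟩ h
    have := isEmpty_tableauPair (fun hlk : l = k => h ⟨l, by rw [hlk]⟩) n
    simp only [Nat.card_of_isEmpty, Nat.cast_zero, mul_zero]
end
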